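/- (Proposition 1.2) Assume the quenched kernels Q_ω are strongly irreducible uniformly in ω: there exist ε > 0 and N ∈ ℕ such that for all x ∈ ℤ^d, all ω ∈ Ω and all e ∈ ℤ^d with ‖e‖₂ = 1, one has Q_ω^n(x,x+e) ≥ ε for some n ≤ N. Then there exists a constant C₀ > 0, not depending on ω, such that for all ω ∈ Ω, all n ≥ 1 and all x,y ∈ ℤ^d, Q_ω^n(x,y) ≤ C₀ n^{−d/2} exp(−‖y−x‖₂²/(C₀ n)). -/

import Mathlib

open scoped Classical

noncomputable section

/-- Points of `ℤ^d`. -/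
abbrev Zd (d : ℕ) := Fin d → ℤ

/-- Euclidean norm on `ℤ^d`. -/
def eucNorm {d : ℕ} (v : Zd d) : ℝ := Real.sqrt (∑ i, ((v i : ℝ)) ^ 2)

/-- `M(ω) = Σ_i Σ_x W_i(T_x ω) · 1{0 ∈ C_i + x}`, where the `i`-th cycle is
`C_i = (z i 0, …, z i (n i))`. -/
def Mfun {d K : ℕ} {Ω : Type*} (n : Fin K → ℕ) (z : Fin K → ℕ → Zd d)
    (T : Zd d → Ω → Ω) (W : Fin K → Ω → ℝ) (ω : Ω) : ℝ :=
  ∑ i : Fin K, ∑' x : Zd d, if ∃ j < n i, z i j + x = 0 then W i (T x ω) else 0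

/-- `p_v(ω) = M(ω)⁻¹ Σ_i Σ_x W_i(T_x ω) · 1{(0,v) ∈ C_i + x}`. -/
def pfun {d K : ℕ} {Ω : Type*} (n : Fin K → ℕ) (z : Fin K → ℕ → Zd d)
    (T : Zd d → Ω → Ω) (W : Fin K → Ω → ℝ) (ω : Ω) (v : Zd d) : ℝ :=
  (Mfun n z T W ω)⁻¹ *
    ∑ i : Fin K, ∑' x : Zd d,
      if ∃ j, 1 ≤ j ∧ j ≤ n i ∧ z i (j - 1) + x = 0 ∧ z i j + x = v then W i (T x ω) else 0

/-- `Λ`, the (finite) set of possible jumps. -/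
def Lam {d K : ℕ} (n : Fin K → ℕ) (z : Fin K → ℕ → Zd d) : Finset (Zd d) :=
  Finset.univ.biUnion fun i => (Finset.range (n i)).image fun j => z i (j + 1) - z i j

/-- The quenched transition kernel `Q_ω(x,y) = p_{y-x}(T_x ω)`. -/
def Qker {d K : ℕ} {Ω : Type*} (n : Fin K → ℕ) (z : Fin K → ℕ → Zd d)
    (T : Zd d → Ω → Ω) (W : Fin K → Ω → ℝ) (ω : Ω) (x y : Zd d) : ℝ :=
  pfun n z T W (T x ω) (y - x)

/-- `n`-fold composition of a transition kernel. -/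
def kerpow {d : ℕ} (Q : Zd d → Zd d → ℝ) : ℕ → Zd d → Zd d → ℝ
  | 0 => fun x y => if x = y then 1 else 0
  | m + 1 => fun x y => ∑' zz : Zd d, kerpow Q m x zz * Q zz y

/-!
Each cycle carries its weight around, so the weights `b x v` of the edges `(x, x + v)` have equal
inflow and outflow at every point: the outflow `M` is a stationary measure of the walk, between
`c` and `C`. Two features of reversible walks have to be replaced.

* *On-diagonal decay.* The energy lost by `f ↦ P f` in one step may vanish, but summed over a fixed
  window of steps it controls the discrete gradient of the sum of `P ^ k f` over the window,
  because by irreducibility the walk reaches all neighbours there. The Nash inequality applied to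
  these sums gives `∑ x, M x * p_n(x, y) ^ 2 ≤ A * n ^ (-d / 2)`.
* *Off-diagonal decay.* Multiplying the weight of each translated cycle by `exp (t * φ u)`, `u` its
  offset and `φ` linear, produces another balanced flow, whose `L²` contraction property turns into
  an exponentially weighted `L²` estimate for the original walk. Optimised in `t` and iterated over
  halved times, it bounds the `L²` mass of `p_n(·, y)` in half spaces by a Gaussian tail.

Splitting `p_n(x, y)` at time `n / 2` and applying both estimates to the walk and to its reversal,
in the direction `φ` of `x - y`, gives the pointwise bound.
-/

open Function Finset
open scoped Pointwise

section WeightedSum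

variable {α : Type*} {μ ν f g : α → ℝ}

@[fun_prop]
theorem hasFiniteSupport_sq (hf : f.HasFiniteSupport) : HasFiniteSupport (f ^ 2) := by
  rw [sq]
  fun_prop

@[fun_prop]
theorem hasFiniteSupport_fun_sq (hf : f.HasFiniteSupport) : HasFiniteSupport fun x => f x ^ 2 :=
  hasFiniteSupport_sq hf

@[fun_prop]
theorem hasFiniteSupport_indicator (hf : f.HasFiniteSupport) (s : Set α) :
    HasFiniteSupport (s.indicator f) :=
  hf.subset (by simp)

@[fun_prop]
theorem hasFiniteSupport_single [DecidableEq α] (y : α) (r : ℝ) :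
    HasFiniteSupport (Pi.single y r : α → ℝ) :=
  (Set.finite_singleton y).subset Pi.support_single_subset

@[fun_prop]
theorem hasFiniteSupport_finsetSum {ι : Type*} {F : ι → α → ℝ}
    (hF : ∀ i, (F i).HasFiniteSupport) (s : Finset ι) : HasFiniteSupport (∑ i ∈ s, F i) := by
  simpa only [Finset.sum_fn] using HasFiniteSupport.sum hF s

theorem summable_mul_of_hasFiniteSupport (μ : α → ℝ) (hf : f.HasFiniteSupport) :
    Summable fun x => μ x * f x :=
  summable_of_hasFiniteSupport (by fun_prop)

/-- The sum `∑ₓ μ(x) f(x)` of `f` against the weight `μ`; it is only used for finitely supported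
`f`, so that no summability question arises. -/
def weightedSum (μ f : α → ℝ) : ℝ := ∑' x, μ x * f x

theorem weightedSum_add (hf : f.HasFiniteSupport) (hg : g.HasFiniteSupport) :
    weightedSum μ (f + g) = weightedSum μ f + weightedSum μ g := by
  simpa only [weightedSum, Pi.add_apply, mul_add] using
    (summable_mul_of_hasFiniteSupport μ hf).tsum_add (summable_mul_of_hasFiniteSupport μ hg)

theorem weightedSum_smul (r : ℝ) (f : α → ℝ) :
    weightedSum μ (r • f) = r * weightedSum μ f := by
  simp only [weightedSum, Pi.smul_apply, smul_eq_mul, mul_left_comm _ r, tsum_mul_left]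

theorem weightedSum_sub (hf : f.HasFiniteSupport) (hg : g.HasFiniteSupport) :
    weightedSum μ (f - g) = weightedSum μ f - weightedSum μ g := by
  simpa only [weightedSum, Pi.sub_apply, mul_sub] using
    (summable_mul_of_hasFiniteSupport μ hf).tsum_sub (summable_mul_of_hasFiniteSupport μ hg)

theorem weightedSum_finsetSum {ι : Type*} {F : ι → α → ℝ}
    (hF : ∀ i, (F i).HasFiniteSupport) (s : Finset ι) :
    weightedSum μ (∑ i ∈ s, F i) = ∑ i ∈ s, weightedSum μ (F i) := by
  simpa only [weightedSum, Finset.sum_apply, Finset.mul_sum] using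
    Summable.tsum_finsetSum fun i _ => summable_mul_of_hasFiniteSupport μ (hF i)

theorem weightedSum_nonneg (hμ : 0 ≤ μ) (hf : 0 ≤ f) : 0 ≤ weightedSum μ f :=
  tsum_nonneg fun x => mul_nonneg (hμ x) (hf x)

theorem weightedSum_le_weightedSum (hf : f.HasFiniteSupport) (hg : g.HasFiniteSupport)
    (h : ∀ x, μ x * f x ≤ ν x * g x) : weightedSum μ f ≤ weightedSum ν g :=
  (summable_mul_of_hasFiniteSupport μ hf).tsum_le_tsum h (summable_mul_of_hasFiniteSupport ν hg)

theorem weightedSum_mono (hμ : 0 ≤ μ) (hf : f.HasFiniteSupport) (hg : g.HasFiniteSupport)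
    (h : f ≤ g) : weightedSum μ f ≤ weightedSum μ g :=
  weightedSum_le_weightedSum hf hg fun x => mul_le_mul_of_nonneg_left (h x) (hμ x)

theorem weightedSum_single_mul [DecidableEq α] (μ : α → ℝ) (y : α) (f : α → ℝ) :
    weightedSum μ (Pi.single y 1 * f) = μ y * f y := by
  rw [weightedSum, tsum_eq_single y fun x hx => by simp [hx], Pi.mul_apply, Pi.single_eq_same,
    one_mul]

theorem sq_weightedSum_mul_le (hμ : 0 ≤ μ) (hf : f.HasFiniteSupport) (hg : g.HasFiniteSupport) :
    weightedSum μ (f * g) ^ 2 ≤ weightedSum μ (f ^ 2) * weightedSum μ (g ^ 2) := by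
  obtain ⟨s, hs⟩ : ∃ s : Finset α, ∀ x ∉ s, f x = 0 ∧ g x = 0 :=
    ⟨(Set.Finite.union hf hg).toFinset, fun x hx => by simpa using hx⟩
  rw [weightedSum, weightedSum, weightedSum, tsum_eq_sum (s := s) (by simp +contextual [hs]),
    tsum_eq_sum (s := s) (by simp +contextual [hs]),
    tsum_eq_sum (s := s) (by simp +contextual [hs])]
  refine sum_sq_le_sum_mul_sum_of_sq_le_mul s (fun x _ => mul_nonneg (hμ x) (sq_nonneg _))
    (fun x _ => mul_nonneg (hμ x) (sq_nonneg _)) fun x _ => le_of_eq ?_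
  simp only [Pi.mul_apply, Pi.pow_apply]
  ring

end WeightedSum

section Walk

variable {G : Type*} [AddCommGroup G] {V : Finset G} {b : G → G → ℝ} {f g : G → ℝ}

/-- The total weight of the edges leaving `x`, where `b x v` is the weight of the edge
`(x, x + v)` and `V` is the finite set of possible jumps. -/
def outflow (V : Finset G) (b : G → G → ℝ) (x : G) : ℝ := ∑ v ∈ V, b x v

/-- Nonnegative edge weights for which the flow into every point equals the flow out of it, and is
positive; the outflow is then a stationary measure of the walk jumping proportionally to `b`. -/
structure BalancedFlow (V : Finset G) (b : G → G → ℝ) : Prop where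
  nonneg : ∀ x v, 0 ≤ b x v
  outflow_pos : ∀ x, 0 < outflow V b x
  inflow_eq : ∀ x, ∑ v ∈ V, b (x - v) v = outflow V b x

/-- The transition operator of the walk that jumps from `x` to `x + v`, `v ∈ V`, with probability
`b x v / outflow V b x`. -/
def walkOp (V : Finset G) (b : G → G → ℝ) : Module.End ℝ (G → ℝ) where
  toFun f x := (outflow V b x)⁻¹ * ∑ v ∈ V, b x v * f (x + v)
  map_add' f g := by
    ext x
    simp [mul_add, sum_add_distrib]
  map_smul' r f := by
    ext x
    simp [mul_sum, mul_left_comm]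

/-- `heatKernel V b m y x` is the probability that the walk started at `x` is at `y` after `m`
steps; the target `y` comes first because the kernel is used as a function of the starting point. -/
def heatKernel [DecidableEq G] (V : Finset G) (b : G → G → ℝ) (m : ℕ) (y : G) : G → ℝ :=
  (walkOp V b ^ m) (Pi.single y 1)

/-- The flow whose walk is the time reversal of the walk of `b`; it jumps by `-V`. -/
def reverseFlow (b : G → G → ℝ) (x v : G) : ℝ := b (x + v) (-v)

theorem walkOp_apply (f : G → ℝ) (x : G) :
    walkOp V b f x = (outflow V b x)⁻¹ * ∑ v ∈ V, b x v * f (x + v) :=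
  rfl

@[fun_prop]
theorem hasFiniteSupport_pow_walkOp (hf : f.HasFiniteSupport) (m : ℕ) :
    HasFiniteSupport ((walkOp V b ^ m) f) := by
  induction m with
  | zero => exact hf
  | succ m ih =>
    rw [pow_succ', Module.End.mul_apply]
    refine HasFiniteSupport.mul_right _ (HasFiniteSupport.sum (fun v => ?_) V)
    fun_prop (disch := exact add_left_injective _)

@[fun_prop]
theorem hasFiniteSupport_walkOp (hf : f.HasFiniteSupport) : HasFiniteSupport (walkOp V b f) := by
  simpa only [pow_one] using hasFiniteSupport_pow_walkOp (V := V) (b := b) hf 1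

@[fun_prop]
theorem hasFiniteSupport_heatKernel [DecidableEq G] (m : ℕ) (y : G) :
    HasFiniteSupport (heatKernel V b m y) := by
  unfold heatKernel
  fun_prop

theorem pow_walkOp_heatKernel [DecidableEq G] (m k : ℕ) (y : G) :
    (walkOp V b ^ m) (heatKernel V b k y) = heatKernel V b (m + k) y := by
  rw [heatKernel, heatKernel, pow_add, Module.End.mul_apply]

namespace BalancedFlow

variable (hb : BalancedFlow V b)
include hb

theorem outflow_nonneg : 0 ≤ outflow V b := fun x => (hb.outflow_pos x).le

theorem outflow_mul_walkOp (f : G → ℝ) (x : G) :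
    outflow V b x * walkOp V b f x = ∑ v ∈ V, b x v * f (x + v) :=
  mul_inv_cancel_left₀ (hb.outflow_pos x).ne' _

theorem pow_walkOp_mono (h : f ≤ g) (m : ℕ) : (walkOp V b ^ m) f ≤ (walkOp V b ^ m) g := by
  induction m with
  | zero => exact h
  | succ m ih =>
    intro x
    rw [pow_succ', Module.End.mul_apply, Module.End.mul_apply, walkOp_apply, walkOp_apply]
    gcongr with v
    · exact inv_nonneg.mpr (hb.outflow_nonneg x)
    · exact hb.nonneg x _
    · exact ih (x + v)

theorem pow_walkOp_nonneg (hf : 0 ≤ f) (m : ℕ) : 0 ≤ (walkOp V b ^ m) f := by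
  simpa only [map_zero] using hb.pow_walkOp_mono hf m

theorem pow_walkOp_one (m : ℕ) : (walkOp V b ^ m) 1 = 1 := by
  induction m with
  | zero => rfl
  | succ m ih =>
    ext x
    simp only [pow_succ', Module.End.mul_apply, ih, walkOp_apply, Pi.one_apply, mul_one]
    exact inv_mul_cancel₀ (hb.outflow_pos x).ne'

theorem heatKernel_nonneg [DecidableEq G] (m : ℕ) (y : G) : 0 ≤ heatKernel V b m y :=
  hb.pow_walkOp_nonneg (Pi.single_nonneg.mpr zero_le_one) m

theorem heatKernel_le_one [DecidableEq G] (m : ℕ) (y : G) : heatKernel V b m y ≤ 1 := by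
  refine (hb.pow_walkOp_mono (fun x => ?_) m).trans_eq (hb.pow_walkOp_one m)
  rw [Pi.single_apply]
  split_ifs <;> simp

theorem heatKernel_mul_le [DecidableEq G] (hf : 0 ≤ f) (m : ℕ) (x y : G) :
    heatKernel V b m y x * f y ≤ (walkOp V b ^ m) f x := by
  have hle : f y • (Pi.single y 1 : G → ℝ) ≤ f := fun z => by
    obtain rfl | hz := eq_or_ne z y
    · simp
    · simpa [hz] using hf z
  simpa [heatKernel, mul_comm] using hb.pow_walkOp_mono hle m x

theorem heatKernel_mul_heatKernel_le [DecidableEq G] (m k : ℕ) (x y z : G) :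
    heatKernel V b m y x * heatKernel V b k z y ≤ heatKernel V b (m + k) z x :=
  (hb.heatKernel_mul_le (hb.heatKernel_nonneg k z) m x y).trans_eq
    (congrFun (pow_walkOp_heatKernel m k z) x)

theorem pow_walkOp_sq_sub_const (f : G → ℝ) (m : ℕ) (x : G) :
    (walkOp V b ^ m) ((f - fun _ => (walkOp V b ^ m) f x) ^ 2) x =
      (walkOp V b ^ m) (f ^ 2) x - (walkOp V b ^ m) f x ^ 2 := by
  set r := (walkOp V b ^ m) f x
  have hexpand : (f - fun _ => r) ^ 2 = f ^ 2 - (2 * r) • f + r ^ 2 • (1 : G → ℝ) := by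
    ext z
    simp only [Pi.pow_apply, Pi.sub_apply, Pi.add_apply, Pi.smul_apply, Pi.one_apply, smul_eq_mul]
    ring
  simp only [hexpand, map_add, map_sub, map_smul, hb.pow_walkOp_one, Pi.add_apply, Pi.sub_apply,
    Pi.smul_apply, Pi.one_apply, smul_eq_mul]
  change (walkOp V b ^ m) (f ^ 2) x - 2 * r * r + r ^ 2 * 1 = _
  ring

theorem sq_pow_walkOp_le (f : G → ℝ) (m : ℕ) :
    (walkOp V b ^ m) f ^ 2 ≤ (walkOp V b ^ m) (f ^ 2) := fun x =>
  sub_nonneg.mp <| (hb.pow_walkOp_nonneg (fun _ => sq_nonneg _) m x).trans_eq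
    (hb.pow_walkOp_sq_sub_const f m x)

theorem heatKernel_mul_sq_sub_le [DecidableEq G] (f : G → ℝ) (m : ℕ) (x y : G) :
    heatKernel V b m y x * (f y - (walkOp V b ^ m) f x) ^ 2 ≤
      (walkOp V b ^ m) (f ^ 2) x - (walkOp V b ^ m) f x ^ 2 :=
  (hb.heatKernel_mul_le (f := (f - fun _ => (walkOp V b ^ m) f x) ^ 2) (fun _ => sq_nonneg _)
    m x y).trans_eq (hb.pow_walkOp_sq_sub_const f m x)

theorem outflow_reverseFlow [DecidableEq G] : outflow (-V) (reverseFlow b) = outflow V b := by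
  funext x
  rw [outflow, sum_neg_index, ← hb.inflow_eq]
  simp only [reverseFlow, sub_eq_add_neg, neg_neg]

theorem reverse [DecidableEq G] : BalancedFlow (-V) (reverseFlow b) where
  nonneg x v := hb.nonneg _ _
  outflow_pos := hb.outflow_reverseFlow ▸ hb.outflow_pos
  inflow_eq x := by
    rw [hb.outflow_reverseFlow, sum_neg_index]
    simp only [reverseFlow, sub_add_cancel, neg_neg, outflow]

theorem weightedSum_mul_walkOp [DecidableEq G] (f : G → ℝ) (hg : g.HasFiniteSupport) :
    weightedSum (outflow V b) (f * walkOp V b g) =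
      weightedSum (outflow V b) (walkOp (-V) (reverseFlow b) f * g) := by
  have hshift : ∀ v, ∑' x, f x * (b x v * g (x + v)) = ∑' x, f (x - v) * (b (x - v) v * g x) :=
    fun v => by
      simpa only [Equiv.coe_addRight, add_sub_cancel_right] using
        (Equiv.addRight v).tsum_eq fun x => f (x - v) * (b (x - v) v * g x)
  calc weightedSum (outflow V b) (f * walkOp V b g)
      = ∑' x, ∑ v ∈ V, f x * (b x v * g (x + v)) := tsum_congr fun x => by
        rw [Pi.mul_apply, mul_left_comm, hb.outflow_mul_walkOp, mul_sum]
    _ = ∑ v ∈ V, ∑' x, f x * (b x v * g (x + v)) := Summable.tsum_finsetSum fun v _ =>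
        summable_of_hasFiniteSupport (by fun_prop (disch := exact add_left_injective _))
    _ = ∑ v ∈ V, ∑' x, f (x - v) * (b (x - v) v * g x) := sum_congr rfl fun v _ => hshift v
    _ = ∑' x, ∑ v ∈ V, f (x - v) * (b (x - v) v * g x) := (Summable.tsum_finsetSum fun v _ =>
        summable_of_hasFiniteSupport (by fun_prop)).symm
    _ = weightedSum (outflow V b) (walkOp (-V) (reverseFlow b) f * g) := tsum_congr fun x => by
        rw [Pi.mul_apply, ← mul_assoc, ← hb.outflow_reverseFlow, hb.reverse.outflow_mul_walkOp,
          sum_neg_index, sum_mul]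
        refine sum_congr rfl fun v _ => ?_
        rw [reverseFlow, neg_neg, ← sub_eq_add_neg]
        ring

theorem weightedSum_walkOp (hf : f.HasFiniteSupport) :
    weightedSum (outflow V b) (walkOp V b f) = weightedSum (outflow V b) f := by
  have hone : walkOp (-V) (reverseFlow b) 1 = 1 := by
    simpa only [pow_one] using hb.reverse.pow_walkOp_one 1
  simpa only [hone, one_mul] using hb.weightedSum_mul_walkOp 1 hf

theorem weightedSum_mul_pow_walkOp [DecidableEq G] (f : G → ℝ) (hg : g.HasFiniteSupport) (m : ℕ) :
    weightedSum (outflow V b) (f * (walkOp V b ^ m) g) =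
      weightedSum (outflow V b) ((walkOp (-V) (reverseFlow b) ^ m) f * g) := by
  induction m generalizing f with
  | zero => rfl
  | succ m ih =>
    rw [pow_succ', Module.End.mul_apply, hb.weightedSum_mul_walkOp f (by fun_prop), ih,
      pow_succ, Module.End.mul_apply]

theorem weightedSum_pow_walkOp (hf : f.HasFiniteSupport) (m : ℕ) :
    weightedSum (outflow V b) ((walkOp V b ^ m) f) = weightedSum (outflow V b) f := by
  induction m with
  | zero => rfl
  | succ m ih => rw [pow_succ', Module.End.mul_apply, hb.weightedSum_walkOp (by fun_prop), ih]

theorem weightedSum_heatKernel [DecidableEq G] (m : ℕ) (y : G) :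
    weightedSum (outflow V b) (heatKernel V b m y) = outflow V b y := by
  rw [heatKernel, hb.weightedSum_pow_walkOp (by fun_prop)]
  simpa using weightedSum_single_mul (outflow V b) y 1

theorem outflow_mul_heatKernel_add [DecidableEq G] (m k : ℕ) (x y : G) :
    outflow V b x * heatKernel V b (m + k) y x =
      weightedSum (outflow V b) (heatKernel (-V) (reverseFlow b) m x * heatKernel V b k y) := by
  rw [← pow_walkOp_heatKernel, ← weightedSum_single_mul,
    hb.weightedSum_mul_pow_walkOp _ (by fun_prop), ← heatKernel]

theorem outflow_mul_heatKernel_reverse [DecidableEq G] (m : ℕ) (x y : G) :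
    outflow V b x * heatKernel (-V) (reverseFlow b) m y x =
      outflow V b y * heatKernel V b m x y :=
  calc outflow V b x * heatKernel (-V) (reverseFlow b) m y x
      = weightedSum (outflow V b)
          (heatKernel (-V) (reverseFlow b) m y * heatKernel V b 0 x) := by
        rw [mul_comm (heatKernel _ _ _ _), ← weightedSum_single_mul]
        rfl
    _ = outflow V b y * heatKernel V b m x y := (hb.outflow_mul_heatKernel_add m 0 y x).symm

theorem weightedSum_sq_pow_walkOp_le (hf : f.HasFiniteSupport) (m : ℕ) :
    weightedSum (outflow V b) ((walkOp V b ^ m) f ^ 2) ≤ weightedSum (outflow V b) (f ^ 2) :=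
  (weightedSum_mono hb.outflow_nonneg (by fun_prop) (by fun_prop)
    (hb.sq_pow_walkOp_le f m)).trans_eq (hb.weightedSum_pow_walkOp (by fun_prop) m)

theorem antitone_weightedSum_sq_pow_walkOp (hf : f.HasFiniteSupport) :
    Antitone fun m => weightedSum (outflow V b) ((walkOp V b ^ m) f ^ 2) :=
  antitone_nat_of_succ_le fun m => by
    simpa only [pow_succ', Module.End.mul_apply, pow_zero, Module.End.one_apply, mul_one] using
      hb.weightedSum_sq_pow_walkOp_le (hasFiniteSupport_pow_walkOp hf m) 1

end BalancedFlow

end Walk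

section Nash

variable {G : Type*} [AddCommGroup G] {f : G → ℝ}

theorem tsum_comp_add_right (f : G → ℝ) (v : G) : ∑' x, f (x + v) = ∑' x, f x :=
  (Equiv.addRight v).tsum_eq f

/-- The squared `ℓ²` distance between `f` and its translate by `v`. -/
def shiftEnergy (f : G → ℝ) (v : G) : ℝ := ∑' x, (f x - f (x + v)) ^ 2

theorem shiftEnergy_zero (f : G → ℝ) : shiftEnergy f 0 = 0 := by simp [shiftEnergy]

theorem shiftEnergy_add_le (hf : f.HasFiniteSupport) (u w : G) {t : ℝ} (ht : 0 < t) :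
    shiftEnergy f (u + w) ≤ (1 + t) * shiftEnergy f u + (1 + t⁻¹) * shiftEnergy f w := by
  have hw : shiftEnergy f w = ∑' x, (f (x + u) - f (x + (u + w))) ^ 2 := by
    rw [shiftEnergy, ← tsum_comp_add_right _ u]
    simp only [add_assoc]
  have hyoung : ∀ p q : ℝ, (p + q) ^ 2 ≤ (1 + t) * p ^ 2 + (1 + t⁻¹) * q ^ 2 := fun p q => by
    have hsq : (1 + t) * p ^ 2 + (1 + t⁻¹) * q ^ 2 - (p + q) ^ 2 = t⁻¹ * (t * p - q) ^ 2 := by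
      field_simp
      ring
    have : 0 ≤ t⁻¹ * (t * p - q) ^ 2 := by positivity
    linarith
  have hsummable : ∀ v, Summable fun x => (f x - f (x + v)) ^ 2 := fun v =>
    summable_of_hasFiniteSupport (by fun_prop (disch := exact add_left_injective _))
  have hsummable' : Summable fun x => (f (x + u) - f (x + (u + w))) ^ 2 :=
    summable_of_hasFiniteSupport (by fun_prop (disch := exact add_left_injective _))
  rw [hw, shiftEnergy, shiftEnergy, ← tsum_mul_left, ← tsum_mul_left,
    ← ((hsummable u).mul_left _).tsum_add (hsummable'.mul_left _)]
  refine (hsummable _).tsum_le_tsum (fun x => ?_)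
    (((hsummable u).mul_left _).add (hsummable'.mul_left _))
  simpa only [sub_add_sub_cancel] using hyoung (f x - f (x + u)) (f (x + u) - f (x + (u + w)))

theorem shiftEnergy_sum_le (hf : f.HasFiniteSupport) {ι : Type*} (s : Finset ι) (u : ι → G) :
    shiftEnergy f (∑ i ∈ s, u i) ≤ #s * ∑ i ∈ s, shiftEnergy f (u i) := by
  induction s using Finset.cons_induction with
  | empty => simp [shiftEnergy_zero]
  | cons a s ha ih =>
    obtain rfl | hs := s.eq_empty_or_nonempty
    · simp
    have hcard : (0 : ℝ) < #s := by exact_mod_cast hs.card_pos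
    rw [sum_cons, sum_cons, card_cons]
    calc shiftEnergy f (u a + ∑ i ∈ s, u i)
        ≤ (1 + #s) * shiftEnergy f (u a) +
            (1 + (#s : ℝ)⁻¹) * (#s * ∑ i ∈ s, shiftEnergy f (u i)) := by
          grw [shiftEnergy_add_le hf _ _ hcard, ih]
      _ = (#s + 1 : ℕ) * (shiftEnergy f (u a) + ∑ i ∈ s, shiftEnergy f (u i)) := by
          push_cast
          field_simp
          ring

theorem shiftEnergy_nsmul_le (hf : f.HasFiniteSupport) (n : ℕ) (u : G) :
    shiftEnergy f (n • u) ≤ n ^ 2 * shiftEnergy f u := by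
  simpa [sq, mul_assoc] using shiftEnergy_sum_le hf (range n) fun _ => u

theorem tsum_sq_eq_shiftEnergy_add (hf : f.HasFiniteSupport) (v : G) :
    ∑' x, f x ^ 2 = shiftEnergy f v / 2 + ∑' x, f x * f (x + v) := by
  have hsq : Summable fun x => f x ^ 2 := summable_of_hasFiniteSupport (by fun_prop)
  have hsq' : Summable fun x => f (x + v) ^ 2 :=
    summable_of_hasFiniteSupport (by fun_prop (disch := exact add_left_injective _))
  have hmul : Summable fun x => f x * f (x + v) := summable_of_hasFiniteSupport (hf.mul_left _)
  have hexpand : shiftEnergy f v =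
      ∑' x, f x ^ 2 + ∑' x, f (x + v) ^ 2 - 2 * ∑' x, f x * f (x + v) := by
    rw [← tsum_mul_left, ← hsq.tsum_add hsq', ← (hsq.add hsq').tsum_sub (hmul.mul_left 2),
      shiftEnergy]
    exact tsum_congr fun x => by ring
  rw [hexpand, tsum_comp_add_right (fun x => f x ^ 2)]
  ring

theorem sum_tsum_mul_shift_le (hf : f.HasFiniteSupport) (hf0 : 0 ≤ f) (B : Finset G) :
    ∑ v ∈ B, ∑' x, f x * f (x + v) ≤ (∑' x, f x) ^ 2 := by
  have hsummable : ∀ v ∈ B, Summable fun x => f x * f (x + v) :=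
    fun v _ => summable_of_hasFiniteSupport (hf.mul_left _)
  rw [← Summable.tsum_finsetSum hsummable, sq, ← tsum_mul_right]
  refine (summable_sum hsummable).tsum_le_tsum (fun x => ?_)
    ((summable_of_hasFiniteSupport hf).mul_right _)
  rw [← mul_sum]
  refine mul_le_mul_of_nonneg_left ?_ (hf0 x)
  calc ∑ v ∈ B, f (x + v) = ∑ v ∈ B, f (v + x) := by simp only [add_comm x]
    _ ≤ ∑' v, f (v + x) := Summable.sum_le_tsum B (fun v _ => hf0 (v + x))
        (summable_of_hasFiniteSupport (by fun_prop (disch := exact add_left_injective _)))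
    _ = ∑' x, f x := tsum_comp_add_right f x

theorem tsum_sq_le_of_shiftEnergy_le (hf : f.HasFiniteSupport) (hf0 : 0 ≤ f) {B : Finset G}
    (hB : B.Nonempty) {E : ℝ} (hE : ∀ v ∈ B, shiftEnergy f v ≤ E) :
    ∑' x, f x ^ 2 ≤ E / 2 + (#B : ℝ)⁻¹ * (∑' x, f x) ^ 2 := by
  have hcard : (0 : ℝ) < #B := by exact_mod_cast hB.card_pos
  have hsum : #B * ∑' x, f x ^ 2 ≤ #B * (E / 2) + (∑' x, f x) ^ 2 := by
    calc #B * ∑' x, f x ^ 2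
        = ∑ v ∈ B, (shiftEnergy f v / 2 + ∑' x, f x * f (x + v)) := by
          simp_rw [← tsum_sq_eq_shiftEnergy_add hf, sum_const, nsmul_eq_mul]
      _ ≤ ∑ _v ∈ B, E / 2 + (∑' x, f x) ^ 2 := by
          rw [sum_add_distrib]
          gcongr with v hv
          · exact hE v hv
          · exact sum_tsum_mul_shift_le hf hf0 B
      _ = #B * (E / 2) + (∑' x, f x) ^ 2 := by rw [sum_const, nsmul_eq_mul]
  refine le_of_mul_le_mul_left (hsum.trans_eq ?_) hcard
  field_simp

theorem shiftEnergy_le_of_forall_single_le {d r : ℕ} {f : Zd d → ℝ} (hf : f.HasFiniteSupport)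
    {E : ℝ} (hE : ∀ i, shiftEnergy f (Pi.single i 1) ≤ E) {v : Zd d}
    (hv : ∀ i, 0 ≤ v i ∧ v i ≤ r) : shiftEnergy f v ≤ (d * r) ^ 2 * E := by
  lift v to Fin d → ℕ using fun i => (hv i).1
  have hvr : ∀ i, v i ≤ r := fun i => Int.ofNat_le.mp (hv i).2
  have hE0 : Fin d → 0 ≤ E := fun i => (tsum_nonneg fun _ => sq_nonneg _).trans (hE i)
  have hdecomp : (fun i => (v i : ℤ)) = ∑ i, v i • (Pi.single i 1 : Zd d) := by
    ext j
    simp [Finset.sum_apply, Pi.single_apply]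
  calc shiftEnergy f (fun i => (v i : ℤ))
      ≤ d * ∑ i, shiftEnergy f (v i • (Pi.single i 1 : Zd d)) := by
        rw [hdecomp]
        simpa using shiftEnergy_sum_le hf univ fun i => v i • (Pi.single i 1 : Zd d)
    _ ≤ d * ∑ _i : Fin d, (r : ℝ) ^ 2 * E := by
        gcongr with i
        grw [shiftEnergy_nsmul_le hf, hE i]
        have := hE0 i
        gcongr
        exact hvr i
    _ = (d * r) ^ 2 * E := by
        rw [sum_const, card_univ, Fintype.card_fin, nsmul_eq_mul]
        ring

theorem nash_at_scale {d : ℕ} {f : Zd d → ℝ} (hf : f.HasFiniteSupport) (hf0 : 0 ≤ f) {E : ℝ}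
    (hE : ∀ i, shiftEnergy f (Pi.single i 1) ≤ E) {r : ℕ} (hr : 0 < r) :
    ∑' x, f x ^ 2 ≤ (d * r) ^ 2 * E / 2 + ((r : ℝ) ^ d)⁻¹ * (∑' x, f x) ^ 2 := by
  set box : Finset (Zd d) := Fintype.piFinset fun _ => Ico (0 : ℤ) r with hbox
  have hcard : (#box : ℝ) = (r : ℝ) ^ d := by simp [hbox]
  have hne : box.Nonempty := Fintype.piFinset_nonempty.mpr fun _ => by simpa using hr
  rw [← hcard]
  refine tsum_sq_le_of_shiftEnergy_le hf hf0 hne fun v hv => ?_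
  refine shiftEnergy_le_of_forall_single_le hf hE fun i => ?_
  obtain ⟨hnonneg, hlt⟩ := mem_Ico.mp (Fintype.mem_piFinset.mp hv i)
  exact ⟨hnonneg, hlt.le⟩

end Nash

section TimeSum

theorem sum_range_shift_sub_comm {M : Type*} [AddCommGroup M] (F : ℕ → M) (m n : ℕ) :
    ∑ j ∈ range m, (F (j + n) - F j) = ∑ j ∈ range n, (F (j + m) - F j) := by
  have hmn := sum_range_add F m n
  have hnm := sum_range_add F n m
  rw [add_comm n m, hmn] at hnm
  simp only [sum_sub_distrib, add_comm _ m, add_comm _ n]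
  rw [sub_eq_sub_iff_add_eq_add, add_comm, ← hnm, add_comm]

theorem sq_sum_range_sub_le (F H : ℕ → ℝ) {k L : ℕ} (hk : k ≤ L) :
    (∑ j ∈ range L, F j - ∑ j ∈ range L, H j) ^ 2 ≤
      2 * L * (∑ j ∈ range L, (F (j + k) - H j) ^ 2 + ∑ j ∈ range L, (F (j + L) - F j) ^ 2) := by
  have hsplit : ∑ j ∈ range L, F j - ∑ j ∈ range L, H j =
      ∑ j ∈ range L, (F (j + k) - H j) + -∑ j ∈ range k, (F (j + L) - F j) := by
    rw [← sum_range_shift_sub_comm F L k]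
    simp only [sum_sub_distrib]
    abel
  have hfirst : (∑ j ∈ range L, (F (j + k) - H j)) ^ 2 ≤
      L * ∑ j ∈ range L, (F (j + k) - H j) ^ 2 := by
    simpa only [card_range] using
      sq_sum_le_card_mul_sum_sq (s := range L) (f := fun j => F (j + k) - H j)
  have hsecond : (∑ j ∈ range k, (F (j + L) - F j)) ^ 2 ≤
      L * ∑ j ∈ range L, (F (j + L) - F j) ^ 2 := by
    calc (∑ j ∈ range k, (F (j + L) - F j)) ^ 2
        ≤ k * ∑ j ∈ range k, (F (j + L) - F j) ^ 2 := by
          simpa only [card_range] using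
            sq_sum_le_card_mul_sum_sq (s := range k) (f := fun j => F (j + L) - F j)
      _ ≤ L * ∑ j ∈ range L, (F (j + L) - F j) ^ 2 := by gcongr
  calc (∑ j ∈ range L, F j - ∑ j ∈ range L, H j) ^ 2
      ≤ 2 * ((∑ j ∈ range L, (F (j + k) - H j)) ^ 2 +
          (∑ j ∈ range k, (F (j + L) - F j)) ^ 2) := by
        rw [hsplit]
        exact add_sq_le.trans_eq (by rw [neg_sq])
    _ ≤ _ := by linarith

variable {G : Type*} [AddCommGroup G] {V : Finset G} {b : G → G → ℝ} {f : G → ℝ}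

/-- The conditional variance, given the starting point, of `f` evaluated after `k` steps. -/
def condVar (V : Finset G) (b : G → G → ℝ) (k : ℕ) (f : G → ℝ) : G → ℝ :=
  (walkOp V b ^ k) (f ^ 2) - (walkOp V b ^ k) f ^ 2

/-- The sum of the first `L` iterates of `f` under the walk. Replacing `f` by it makes the Nash
argument insensitive to the parity of the walk. -/
def timeSum (V : Finset G) (b : G → G → ℝ) (L : ℕ) (f : G → ℝ) : G → ℝ :=
  ∑ j ∈ range L, (walkOp V b ^ j) f

/-- The sum of all conditional variances over at most `L` steps of the first `L` iterates of `f`. -/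
def varSum (V : Finset G) (b : G → G → ℝ) (L : ℕ) (f : G → ℝ) : G → ℝ :=
  ∑ j ∈ range L, ∑ k ∈ range (L + 1), condVar V b k ((walkOp V b ^ j) f)

theorem timeSum_apply (L : ℕ) (f : G → ℝ) (x : G) :
    timeSum V b L f x = ∑ j ∈ range L, (walkOp V b ^ j) f x :=
  Finset.sum_apply _ _ _

theorem varSum_apply (L : ℕ) (f : G → ℝ) (x : G) :
    varSum V b L f x =
      ∑ j ∈ range L, ∑ k ∈ range (L + 1), condVar V b k ((walkOp V b ^ j) f) x := by
  simp only [varSum, Finset.sum_apply]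

@[fun_prop]
theorem hasFiniteSupport_condVar (hf : f.HasFiniteSupport) (k : ℕ) :
    HasFiniteSupport (condVar V b k f) := by
  unfold condVar
  fun_prop

@[fun_prop]
theorem hasFiniteSupport_timeSum (hf : f.HasFiniteSupport) (L : ℕ) :
    HasFiniteSupport (timeSum V b L f) := by
  unfold timeSum
  fun_prop

@[fun_prop]
theorem hasFiniteSupport_varSum (hf : f.HasFiniteSupport) (L : ℕ) :
    HasFiniteSupport (varSum V b L f) := by
  unfold varSum
  fun_prop

namespace BalancedFlow

variable (hb : BalancedFlow V b)
include hb

theorem condVar_nonneg (k : ℕ) (f : G → ℝ) : 0 ≤ condVar V b k f :=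
  sub_nonneg.mpr (hb.sq_pow_walkOp_le f k)

theorem timeSum_nonneg (hf0 : 0 ≤ f) (L : ℕ) : 0 ≤ timeSum V b L f :=
  sum_nonneg fun j _ => hb.pow_walkOp_nonneg hf0 j

theorem le_timeSum (hf0 : 0 ≤ f) {L : ℕ} (hL : 0 < L) : f ≤ timeSum V b L f :=
  single_le_sum (f := fun j => (walkOp V b ^ j) f) (fun j _ => hb.pow_walkOp_nonneg hf0 j)
    (mem_range.mpr hL)

theorem weightedSum_timeSum (hf : f.HasFiniteSupport) (L : ℕ) :
    weightedSum (outflow V b) (timeSum V b L f) = L * weightedSum (outflow V b) f := by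
  rw [timeSum, weightedSum_finsetSum (fun j => by fun_prop)]
  simp only [hb.weightedSum_pow_walkOp hf, sum_const, card_range, nsmul_eq_mul]

theorem weightedSum_condVar (hf : f.HasFiniteSupport) (j k : ℕ) :
    weightedSum (outflow V b) (condVar V b k ((walkOp V b ^ j) f)) =
      weightedSum (outflow V b) ((walkOp V b ^ j) f ^ 2) -
        weightedSum (outflow V b) ((walkOp V b ^ (j + k)) f ^ 2) := by
  rw [condVar, weightedSum_sub (by fun_prop) (by fun_prop),
    hb.weightedSum_pow_walkOp (by fun_prop), ← Module.End.mul_apply, ← pow_add, add_comm k]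

theorem weightedSum_varSum_le (hf : f.HasFiniteSupport) (L : ℕ) :
    weightedSum (outflow V b) (varSum V b L f) ≤ L * (L + 1) *
      (weightedSum (outflow V b) (f ^ 2) -
        weightedSum (outflow V b) ((walkOp V b ^ (2 * L)) f ^ 2)) := by
  have hanti := hb.antitone_weightedSum_sq_pow_walkOp hf
  rw [varSum, weightedSum_finsetSum (fun j => by fun_prop)]
  have hterm : ∀ j ∈ range L, ∀ k ∈ range (L + 1),
      weightedSum (outflow V b) (condVar V b k ((walkOp V b ^ j) f)) ≤
        weightedSum (outflow V b) (f ^ 2) -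
          weightedSum (outflow V b) ((walkOp V b ^ (2 * L)) f ^ 2) := fun j hj k hk => by
    rw [hb.weightedSum_condVar hf]
    have hjk : j + k ≤ 2 * L := by
      rw [mem_range] at hj hk
      omega
    exact sub_le_sub (hanti (Nat.zero_le j)) (hanti hjk)
  calc ∑ j ∈ range L, weightedSum (outflow V b)
        (∑ k ∈ range (L + 1), condVar V b k ((walkOp V b ^ j) f))
      = ∑ j ∈ range L, ∑ k ∈ range (L + 1),
          weightedSum (outflow V b) (condVar V b k ((walkOp V b ^ j) f)) :=
        sum_congr rfl fun j _ => weightedSum_finsetSum (fun k => by fun_prop) _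
    _ ≤ _ := sum_le_sum fun j hj => sum_le_sum fun k hk => hterm j hj k hk
    _ = _ := by
        simp only [sum_const, card_range, nsmul_eq_mul]
        push_cast
        ring

variable [DecidableEq G] {L : ℕ} {δ : ℝ}

theorem mul_sq_pow_walkOp_sub_le_sum_condVar {k : ℕ} {x y : G} (hk : k ≤ L)
    (hδ : δ ≤ heatKernel V b k y x) (f : G → ℝ) :
    δ * ((walkOp V b ^ k) f x - f y) ^ 2 ≤ ∑ i ∈ range (L + 1), condVar V b i f x := by
  calc δ * ((walkOp V b ^ k) f x - f y) ^ 2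
      ≤ heatKernel V b k y x * (f y - (walkOp V b ^ k) f x) ^ 2 := by
        rw [← neg_sub, neg_sq]
        gcongr
    _ ≤ condVar V b k f x := hb.heatKernel_mul_sq_sub_le f k x y
    _ ≤ ∑ i ∈ range (L + 1), condVar V b i f x :=
        single_le_sum (f := fun i => condVar V b i f x) (fun i _ => hb.condVar_nonneg i f x)
          (mem_range.mpr (by omega))

theorem mul_sq_sub_timeSum_le {k : ℕ} {u x : G} (hk : k ≤ L) (hδ : 0 ≤ δ)
    (hreturn : δ ≤ heatKernel V b L x x) (hjump : δ ≤ heatKernel V b k (x + u) x) (f : G → ℝ) :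
    δ * (timeSum V b L f x - timeSum V b L f (x + u)) ^ 2 ≤ 4 * L * varSum V b L f x := by
  set F : ℕ → ℝ := fun j => (walkOp V b ^ j) f x
  set H : ℕ → ℝ := fun j => (walkOp V b ^ j) f (x + u)
  set S : ℕ → ℝ := fun j => ∑ k ∈ range (L + 1), condVar V b k ((walkOp V b ^ j) f) x
  have hF : ∀ i j, F (j + i) = (walkOp V b ^ i) ((walkOp V b ^ j) f) x := fun i j => by
    rw [← Module.End.mul_apply, ← pow_add, add_comm i]
  have hFH : ∀ j, δ * (F (j + k) - H j) ^ 2 ≤ S j := fun j => by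
    rw [hF]
    exact hb.mul_sq_pow_walkOp_sub_le_sum_condVar hk hjump _
  have hFF : ∀ j, δ * (F (j + L) - F j) ^ 2 ≤ S j := fun j => by
    rw [hF]
    exact hb.mul_sq_pow_walkOp_sub_le_sum_condVar le_rfl hreturn _
  rw [timeSum_apply, timeSum_apply, varSum_apply]
  calc δ * (∑ j ∈ range L, F j - ∑ j ∈ range L, H j) ^ 2
      ≤ δ * (2 * L * (∑ j ∈ range L, (F (j + k) - H j) ^ 2 +
          ∑ j ∈ range L, (F (j + L) - F j) ^ 2)) := by
        gcongr
        exact sq_sum_range_sub_le F H hk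
    _ = 2 * L * (∑ j ∈ range L, δ * (F (j + k) - H j) ^ 2 +
          ∑ j ∈ range L, δ * (F (j + L) - F j) ^ 2) := by
        simp only [← mul_sum]
        ring
    _ ≤ 2 * L * (∑ j ∈ range L, S j + ∑ j ∈ range L, S j) := by
        gcongr with j _ j _
        · exact hFH j
        · exact hFF j
    _ = 4 * L * ∑ j ∈ range L, S j := by ring

theorem mul_shiftEnergy_timeSum_le {c : ℝ} (hout : ∀ x, c ≤ outflow V b x) (hδ : 0 ≤ δ)
    {u : G} (hreturn : ∀ x, δ ≤ heatKernel V b L x x)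
    (hjump : ∀ x, ∃ k ≤ L, δ ≤ heatKernel V b k (x + u) x) (hf : f.HasFiniteSupport) :
    c * δ * shiftEnergy (timeSum V b L f) u ≤ 4 * L * (L * (L + 1) *
      (weightedSum (outflow V b) (f ^ 2) -
        weightedSum (outflow V b) ((walkOp V b ^ (2 * L)) f ^ 2))) := by
  calc c * δ * shiftEnergy (timeSum V b L f) u
      ≤ 4 * L * weightedSum (outflow V b) (varSum V b L f) := by
        rw [shiftEnergy, weightedSum, ← tsum_mul_left, ← tsum_mul_left]
        refine Summable.tsum_le_tsum (fun x => ?_) (summable_of_hasFiniteSupport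
          (by fun_prop (disch := exact add_left_injective _)))
          (summable_of_hasFiniteSupport (by fun_prop))
        obtain ⟨k, hk, hkx⟩ := hjump x
        have hx := hb.mul_sq_sub_timeSum_le hk hδ (hreturn x) hkx f
        have hx0 : 0 ≤ δ * (timeSum V b L f x - timeSum V b L f (x + u)) ^ 2 := by positivity
        calc c * δ * (timeSum V b L f x - timeSum V b L f (x + u)) ^ 2
            ≤ outflow V b x * (4 * L * varSum V b L f x) := by
              rw [mul_assoc]
              exact mul_le_mul (hout x) hx hx0 (hb.outflow_nonneg x)
          _ = 4 * L * (outflow V b x * varSum V b L f x) := by ring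
    _ ≤ _ := by grw [hb.weightedSum_varSum_le hf]

end BalancedFlow

end TimeSum

section Elliptic

theorem eucNorm_single {d : ℕ} (i : Fin d) (s : ℤ) :
    eucNorm (Pi.single i s : Zd d) = |(s : ℝ)| := by
  have hcoord : ∀ j, ((Pi.single i s : Zd d) j : ℝ) ^ 2 = if j = i then (s : ℝ) ^ 2 else 0 :=
    fun j => by
      rw [Pi.single_apply]
      split_ifs <;> simp
  rw [eucNorm, ← Real.sqrt_sq_eq_abs]
  simp only [hcoord, sum_ite_eq', mem_univ, if_true]

section Return

variable {G : Type*} [AddCommGroup G] [DecidableEq G] {V : Finset G} {b : G → G → ℝ}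

theorem BalancedFlow.pow_le_heatKernel_self (hb : BalancedFlow V b) {m : ℕ} {x : G} {δ : ℝ}
    (hδ : 0 ≤ δ) (hm : δ ≤ heatKernel V b m x x) (t : ℕ) :
    δ ^ t ≤ heatKernel V b (m * t) x x := by
  induction t with
  | zero => simp [heatKernel]
  | succ t ih =>
    rw [pow_succ, Nat.mul_succ]
    exact (mul_le_mul ih hm hδ (hb.heatKernel_nonneg _ _ _)).trans
      (hb.heatKernel_mul_heatKernel_le _ _ _ _ _)

theorem BalancedFlow.pow_factorial_le_heatKernel_self (hb : BalancedFlow V b) {m M : ℕ}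
    (hm0 : 0 < m) (hmM : m ≤ M) {x : G} {δ : ℝ} (hδ : 0 ≤ δ) (hm : δ ≤ heatKernel V b m x x) :
    δ ^ M.factorial ≤ heatKernel V b M.factorial x x := by
  obtain ⟨t, ht⟩ : m ∣ M.factorial := Nat.dvd_factorial hm0 hmM
  have htM : t ≤ M.factorial := ht ▸ Nat.le_mul_of_pos_left t hm0
  calc δ ^ M.factorial ≤ δ ^ t :=
        pow_le_pow_of_le_one hδ (hm.trans (hb.heatKernel_le_one m x x)) htM
    _ ≤ heatKernel V b M.factorial x x := ht ▸ hb.pow_le_heatKernel_self hδ hm t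

end Return

variable {d : ℕ} {V : Finset (Zd d)} {b : Zd d → Zd d → ℝ} {c C ε : ℝ} {N : ℕ}

/-- A balanced flow on `ℤ^d` whose stationary measure lies between `c` and `C`, and whose walk
reaches every nearest neighbour within `N` steps with probability at least `ε`. -/
structure EllipticFlow (V : Finset (Zd d)) (b : Zd d → Zd d → ℝ) (c C ε : ℝ) (N : ℕ) : Prop
    extends BalancedFlow V b where
  le_outflow : ∀ x, c ≤ outflow V b x
  outflow_le : ∀ x, outflow V b x ≤ C
  irred : ∀ x e, eucNorm e = 1 → ∃ m ≤ N, ε ≤ heatKernel V b m (x + e) x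

namespace EllipticFlow

variable (hb : EllipticFlow V b c C ε N)
include hb

theorem exists_le_heatKernel_add_single (x : Zd d) (i : Fin d) {s : ℤ} (hs : |s| = 1) :
    ∃ m ≤ N, ε ≤ heatKernel V b m (x + Pi.single i s) x :=
  hb.irred x _ <| by
    rw [eucNorm_single]
    exact_mod_cast hs

theorem le_one (hd : 0 < d) : ε ≤ 1 := by
  obtain ⟨m, -, hm⟩ := hb.exists_le_heatKernel_add_single 0 ⟨0, hd⟩ abs_one
  exact hm.trans (hb.heatKernel_le_one _ _ _)

theorem upper_pos : 0 < C := (hb.outflow_pos 0).trans_le (hb.outflow_le 0)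

theorem exists_sq_le_heatKernel_self (hd : 0 < d) (hε : 0 < ε) (x : Zd d) :
    ∃ m, 0 < m ∧ m ≤ 2 * N ∧ ε ^ 2 ≤ heatKernel V b m x x := by
  set i : Fin d := ⟨0, hd⟩
  obtain ⟨m, hmN, hm⟩ := hb.exists_le_heatKernel_add_single x i abs_one
  obtain ⟨k, hkN, hk⟩ :=
    hb.exists_le_heatKernel_add_single (x + Pi.single i 1) i (s := -1) (by simp)
  rw [add_assoc, ← Pi.single_add, add_neg_cancel, Pi.single_zero, add_zero] at hk
  have hm0 : m ≠ 0 := by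
    rintro rfl
    have hne : x ≠ x + Pi.single i 1 := by simp
    simp only [heatKernel, pow_zero, Module.End.one_apply, Pi.single_eq_of_ne hne] at hm
    linarith
  refine ⟨m + k, by omega, by omega, ?_⟩
  calc ε ^ 2 = ε * ε := sq ε
    _ ≤ _ := mul_le_mul hm hk hε.le (hb.heatKernel_nonneg _ _ _)
    _ ≤ heatKernel V b (m + k) x x := hb.heatKernel_mul_heatKernel_le m k x _ x

theorem sq_pow_le_heatKernel_self (hd : 0 < d) (hε : 0 < ε) (x : Zd d) :
    (ε ^ 2) ^ (2 * N).factorial ≤ heatKernel V b (2 * N).factorial x x := by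
  obtain ⟨m, hm0, hmN, hm⟩ := hb.exists_sq_le_heatKernel_self hd hε x
  exact hb.pow_factorial_le_heatKernel_self hm0 hmN (sq_nonneg ε) hm

theorem exists_sq_pow_le_heatKernel_add_single (hd : 0 < d) (hε : 0 < ε) (x : Zd d) (i : Fin d) :
    ∃ k ≤ (2 * N).factorial,
      (ε ^ 2) ^ (2 * N).factorial ≤ heatKernel V b k (x + Pi.single i 1) x := by
  obtain ⟨k, hkN, hk⟩ := hb.exists_le_heatKernel_add_single x i abs_one
  have hNfact : N ≤ (2 * N).factorial := (by omega : N ≤ 2 * N).trans (Nat.self_le_factorial _)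
  refine ⟨k, hkN.trans hNfact, le_trans ?_ hk⟩
  rw [← pow_mul]
  have hpos := Nat.factorial_pos (2 * N)
  exact pow_le_of_le_one hε.le (hb.le_one hd) (by omega)

theorem tsum_le (hc : 0 < c) {f : Zd d → ℝ} (hf : f.HasFiniteSupport) (hf0 : 0 ≤ f) :
    ∑' x, f x ≤ c⁻¹ * weightedSum (outflow V b) f := by
  rw [weightedSum, ← tsum_mul_left]
  refine (summable_of_hasFiniteSupport hf).tsum_le_tsum (fun x => ?_)
    (summable_of_hasFiniteSupport (by fun_prop))
  rw [← mul_assoc]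
  exact le_mul_of_one_le_left (hf0 x) ((one_le_inv_mul₀ hc).mpr (hb.le_outflow x))

theorem weightedSum_le {f : Zd d → ℝ} (hf : f.HasFiniteSupport) (hf0 : 0 ≤ f) :
    weightedSum (outflow V b) f ≤ C * ∑' x, f x := by
  rw [weightedSum, ← tsum_mul_left]
  exact Summable.tsum_le_tsum (fun x => mul_le_mul_of_nonneg_right (hb.outflow_le x) (hf0 x))
    (summable_of_hasFiniteSupport (by fun_prop)) (summable_of_hasFiniteSupport (by fun_prop))

theorem weightedSum_sq_le (hd : 0 < d) (hc : 0 < c) (hε : 0 < ε) {L : ℕ}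
    (hL : L = (2 * N).factorial) {f : Zd d → ℝ} (hf : f.HasFiniteSupport) (hf0 : 0 ≤ f) {r : ℕ}
    (hr : 0 < r) :
    weightedSum (outflow V b) (f ^ 2) ≤
      C * (2 * d ^ 2 * L ^ 2 * (L + 1) / (c * (ε ^ 2) ^ L)) * r ^ 2 *
        (weightedSum (outflow V b) (f ^ 2) -
          weightedSum (outflow V b) ((walkOp V b ^ (2 * L)) f ^ 2)) +
      C * (L / c * weightedSum (outflow V b) f) ^ 2 * ((r : ℝ) ^ d)⁻¹ := by
  have hcδ : 0 < c * (ε ^ 2) ^ L := by positivity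
  have hC := hb.upper_pos
  set D := weightedSum (outflow V b) (f ^ 2) -
    weightedSum (outflow V b) ((walkOp V b ^ (2 * L)) f ^ 2)
  set g := timeSum V b L f
  have hg : g.HasFiniteSupport := by fun_prop
  have hg0 : 0 ≤ g := hb.timeSum_nonneg hf0 L
  have hgradient : ∀ i, shiftEnergy g (Pi.single i 1) ≤
      4 * L * (L * (L + 1) * D) / (c * (ε ^ 2) ^ L) := fun i => by
    rw [le_div_iff₀' hcδ]
    refine hb.mul_shiftEnergy_timeSum_le hb.le_outflow (by positivity) (fun x => ?_)
      (fun x => ?_) hf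
    · exact hL ▸ hb.sq_pow_le_heatKernel_self hd hε x
    · exact hL ▸ hb.exists_sq_pow_le_heatKernel_add_single hd hε x i
  have hmass : ∑' x, g x ≤ L / c * weightedSum (outflow V b) f :=
    (hb.tsum_le hc hg hg0).trans_eq (by rw [hb.weightedSum_timeSum hf]; ring)
  have hfg : f ^ 2 ≤ g ^ 2 :=
    pow_le_pow_left₀ hf0 (hb.le_timeSum hf0 (hL ▸ Nat.factorial_pos _)) 2
  calc weightedSum (outflow V b) (f ^ 2) ≤ weightedSum (outflow V b) (g ^ 2) :=
        weightedSum_mono hb.outflow_nonneg (by fun_prop) (by fun_prop) hfg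
    _ ≤ C * ∑' x, g x ^ 2 := hb.weightedSum_le (hasFiniteSupport_sq hg) fun x => sq_nonneg _
    _ ≤ C * ((d * r) ^ 2 * (4 * L * (L * (L + 1) * D) / (c * (ε ^ 2) ^ L)) / 2 +
          ((r : ℝ) ^ d)⁻¹ * (L / c * weightedSum (outflow V b) f) ^ 2) := by
        grw [nash_at_scale hg hg0 hgradient hr, hmass]
        exact tsum_nonneg hg0
    _ = _ := by ring

end EllipticFlow

end Elliptic

section Decay

variable {α : ℕ → ℝ}

theorem mul_le_of_le_mul_sub_add (hα : Antitone α) (hα0 : 0 ≤ α) {a b : ℝ} (ha : 0 ≤ a) {q : ℕ}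
    (h : ∀ m, α m ≤ a * (α m - α (m + q)) + b) (k t : ℕ) :
    t * α (k + t) ≤ a * q * α k + t * b := by
  have htelescope : ∑ j ∈ range t, (α (k + j) - α (k + j + q)) ≤ q * α k := by
    calc ∑ j ∈ range t, (α (k + j) - α (k + j + q))
        = ∑ j ∈ range q, (α (k + j) - α (k + j + t)) := by
          have hcomm := sum_range_shift_sub_comm (fun j => -α (k + j)) t q
          simpa only [neg_sub_neg, add_assoc] using hcomm
      _ ≤ ∑ _ ∈ range q, α k := sum_le_sum fun j _ =>
          (sub_le_self _ (hα0 _)).trans (hα (Nat.le_add_right k j))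
      _ = q * α k := by simp
  calc t * α (k + t) = ∑ _ ∈ range t, α (k + t) := by simp
    _ ≤ ∑ j ∈ range t, α (k + j) := sum_le_sum fun j hj => hα <| by
        have := mem_range.mp hj
        omega
    _ ≤ ∑ j ∈ range t, (a * (α (k + j) - α (k + j + q)) + b) := sum_le_sum fun j _ => h _
    _ = a * ∑ j ∈ range t, (α (k + j) - α (k + j + q)) + t * b := by
        simp only [sum_add_distrib, ← mul_sum, sum_const, card_range, nsmul_eq_mul]
    _ ≤ a * q * α k + t * b := by
        rw [mul_assoc]
        gcongr

variable {d q : ℕ} {K₀ K₁ K₂ : ℝ}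

theorem mul_two_mul_pow_le_of_scale {ρ τ κ u u' : ℝ} (hρ : 0 < ρ) (hτ : 0 < τ) (hu : 0 ≤ u)
    (hκ : 2 * (2 ^ d * κ) ≤ τ)
    (h : τ * ρ ^ 2 * u' ≤ κ * ρ ^ 2 * u + τ * ρ ^ 2 * (K₂ * (ρ ^ d)⁻¹)) :
    u' * (2 * ρ) ^ d ≤ u * ρ ^ d / 2 + 2 ^ d * K₂ := by
  have : 0 < ρ ^ d := by positivity
  have hdiv : τ * (u' * ρ ^ d) ≤ κ * (u * ρ ^ d) + τ * K₂ := by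
    refine le_of_mul_le_mul_left ?_ (by positivity : 0 < ρ ^ 2 / ρ ^ d)
    calc ρ ^ 2 / ρ ^ d * (τ * (u' * ρ ^ d)) = τ * ρ ^ 2 * u' := by field_simp
      _ ≤ _ := h
      _ = ρ ^ 2 / ρ ^ d * (κ * (u * ρ ^ d) + τ * K₂) := by field_simp
  refine le_of_mul_le_mul_left ?_ hτ
  calc τ * (u' * (2 * ρ) ^ d) = 2 ^ d * (τ * (u' * ρ ^ d)) := by rw [mul_pow]; ring
    _ ≤ 2 ^ d * (κ * (u * ρ ^ d) + τ * K₂) := by gcongr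
    _ = 2 ^ d * κ * (u * ρ ^ d) + τ * (2 ^ d * K₂) := by ring
    _ ≤ τ / 2 * (u * ρ ^ d) + τ * (2 ^ d * K₂) := by
      gcongr
      linarith
    _ = τ * (u * ρ ^ d / 2 + 2 ^ d * K₂) := by ring

-- Between the times `4 ^ (s + i) - 1` and `4 ^ (s + i + 1) - 1` the scale is `r = 2 ^ i`.
theorem mul_pow_le_of_nash (hα : Antitone α) (hα0 : 0 ≤ α) (hα_le : ∀ m, α m ≤ K₀)
    (hK₁ : 0 ≤ K₁) (hK₂ : 0 ≤ K₂)
    (h : ∀ m r : ℕ, 0 < r → α m ≤ K₁ * r ^ 2 * (α m - α (m + q)) + K₂ * ((r : ℝ) ^ d)⁻¹)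
    {s : ℕ} (hs : 2 * (2 ^ d * (K₁ * q)) ≤ 3 * 4 ^ s) (i : ℕ) :
    α (4 ^ (s + i) - 1) * (2 ^ i) ^ d ≤ K₀ + 2 * (2 ^ d * K₂) := by
  have hrem : 0 ≤ 2 ^ d * K₂ := by positivity
  induction i with
  | zero =>
    have := hα_le (4 ^ s - 1)
    simp only [add_zero, pow_zero, one_pow, mul_one]
    linarith
  | succ i ih =>
    set k := 4 ^ (s + i) - 1
    have htime : 4 ^ (s + (i + 1)) - 1 = k + 3 * 4 ^ (s + i) := by
      have : 0 < 4 ^ (s + i) := by positivity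
      rw [← add_assoc, pow_succ]
      omega
    have hstep := mul_le_of_le_mul_sub_add hα hα0 (by positivity) (h · (2 ^ i) (by positivity)) k
      (3 * 4 ^ (s + i))
    have hpow : (3 : ℝ) * 4 ^ (s + i) = 3 * 4 ^ s * (2 ^ i) ^ 2 := by
      rw [pow_add, ← pow_mul, mul_comm i, pow_mul, mul_assoc]
      norm_num
    push_cast [hpow] at hstep
    have hcontract := mul_two_mul_pow_le_of_scale (K₂ := K₂) (by positivity) (by positivity)
      (hα0 k) hs (hstep.trans_eq (by ring))
    rw [htime, pow_succ']
    have hK₀ : 0 ≤ K₀ := (hα0 0).trans (hα_le 0)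
    linarith

theorem exists_le_inv_sqrt_pow_of_nash (d q : ℕ) {K₀ K₁ K₂ : ℝ} (hK₀ : 0 < K₀) (hK₁ : 0 ≤ K₁)
    (hK₂ : 0 ≤ K₂) :
    ∃ A, 0 < A ∧ ∀ α : ℕ → ℝ, Antitone α → 0 ≤ α → (∀ m, α m ≤ K₀) →
      (∀ m r : ℕ, 0 < r → α m ≤ K₁ * r ^ 2 * (α m - α (m + q)) + K₂ * ((r : ℝ) ^ d)⁻¹) →
      ∀ n : ℕ, α n ≤ A * (√(n + 1) ^ d)⁻¹ := by
  obtain ⟨s, hs⟩ := pow_unbounded_of_one_lt (2 * (2 ^ d * (K₁ * q))) (by norm_num : (1 : ℝ) < 4)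
  have hs' : 2 * (2 ^ d * (K₁ * q)) ≤ 3 * 4 ^ s := by
    linarith [(by positivity : (0 : ℝ) < 4 ^ s)]
  set K₃ := K₀ + 2 * (2 ^ d * K₂)
  refine ⟨K₃ * (2 ^ (s + 1)) ^ d, by positivity, fun α hα hα0 hα_le h n => ?_⟩
  set i := Nat.log 4 (n + 1) - s
  have hdyadic : α n * (2 ^ i) ^ d ≤ K₃ := by
    rcases le_or_gt (Nat.log 4 (n + 1)) s with hlog | hlog
    · rw [show i = 0 by omega, pow_zero, one_pow, mul_one]
      exact (hα_le n).trans (le_add_of_nonneg_right (by positivity))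
    · have hn : 4 ^ (s + i) ≤ n + 1 :=
        (show s + i = Nat.log 4 (n + 1) by omega) ▸ Nat.pow_log_le_self 4 (Nat.succ_ne_zero n)
      refine le_trans ?_ (mul_pow_le_of_nash hα hα0 hα_le hK₁ hK₂ h hs' i)
      gcongr
      exact hα (by omega)
  have hsqrt : √((n : ℝ) + 1) ≤ 2 ^ (s + 1) * 2 ^ i := by
    have hn : n + 1 ≤ 4 ^ (s + 1 + i) := (Nat.lt_pow_succ_log_self (by norm_num) (n + 1)).le.trans
      (Nat.pow_le_pow_right (by norm_num) (by omega))
    rw [Real.sqrt_le_left (by positivity), ← pow_add, ← pow_mul, mul_comm _ 2, pow_mul]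
    norm_num
    exact_mod_cast hn
  rw [← div_eq_mul_inv, le_div_iff₀ (by positivity)]
  calc α n * √(n + 1) ^ d ≤ α n * (2 ^ (s + 1) * 2 ^ i) ^ d := by
        gcongr
        exact hα0 n
    _ = α n * (2 ^ i) ^ d * (2 ^ (s + 1)) ^ d := by rw [mul_pow]; ring
    _ ≤ K₃ * (2 ^ (s + 1)) ^ d := by gcongr

theorem exists_weightedSum_sq_heatKernel_le {d : ℕ} (hd : 0 < d) {c C ε : ℝ} (hc : 0 < c)
    (hC : 0 < C) (hε : 0 < ε) (N : ℕ) :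
    ∃ A, 0 < A ∧ ∀ V b, EllipticFlow (d := d) V b c C ε N → ∀ y (n : ℕ),
      weightedSum (outflow V b) (heatKernel V b n y ^ 2) ≤ A * (√(n + 1) ^ d)⁻¹ := by
  set L := (2 * N).factorial with hL
  obtain ⟨A, hA, h⟩ := exists_le_inv_sqrt_pow_of_nash d (2 * L) hC
    (K₁ := C * (2 * d ^ 2 * L ^ 2 * (L + 1) / (c * (ε ^ 2) ^ L))) (by positivity)
    (K₂ := C * (L / c * C) ^ 2) (by positivity)
  refine ⟨A, hA, fun V b hb y => h _ (hb.antitone_weightedSum_sq_pow_walkOp (by fun_prop))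
    (fun n => weightedSum_nonneg hb.outflow_nonneg fun _ => sq_nonneg _) (fun n => ?_)
    fun m r hr => ?_⟩
  · calc weightedSum (outflow V b) (heatKernel V b n y ^ 2)
        ≤ weightedSum (outflow V b) (heatKernel V b n y) :=
          weightedSum_mono hb.outflow_nonneg (by fun_prop) (by fun_prop) fun x =>
            pow_le_of_le_one (hb.heatKernel_nonneg n y x) (hb.heatKernel_le_one n y x) two_ne_zero
      _ ≤ C := (hb.weightedSum_heatKernel n y).trans_le (hb.outflow_le y)
  · have hnash := hb.weightedSum_sq_le hd hc hε hL (hasFiniteSupport_heatKernel m y)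
      (hb.heatKernel_nonneg m y) hr
    rw [pow_walkOp_heatKernel, hb.weightedSum_heatKernel, add_comm (2 * L)] at hnash
    refine hnash.trans (add_le_add_right ?_ _)
    gcongr
    · exact mul_nonneg (by positivity) (hb.outflow_nonneg y)
    · exact hb.outflow_le y

end Decay

section Tilt

theorem sq_sum_mul_le_of_abs_sub_le {ι : Type*} {s : Finset ι} {q q' : ι → ℝ} {θ : ℝ}
    (hq' : ∀ v ∈ s, 0 ≤ q' v) (hsum : ∑ v ∈ s, q v = 1) (hsum' : ∑ v ∈ s, q' v = 1)
    (hqq' : ∀ v ∈ s, |q v - q' v| ≤ θ * q' v) (f : ι → ℝ) :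
    (∑ v ∈ s, q v * f v) ^ 2 ≤ (1 + θ ^ 2) * ∑ v ∈ s, q' v * f v ^ 2 := by
  have hsq : ∀ v ∈ s, (q v - q' v) ^ 2 ≤ (θ * q' v) ^ 2 := fun v hv =>
    sq_le_sq' (abs_le.mp (hqq' v hv)).1 (abs_le.mp (hqq' v hv)).2
  have hzero : ∀ v ∈ s, q' v = 0 → q v = 0 := fun v hv h0 => by simpa [h0] using hqq' v hv
  have hdiv : ∀ v ∈ s, q v ^ 2 / q' v ≤ 2 * q v - q' v + θ ^ 2 * q' v := fun v hv => by
    rcases (hq' v hv).eq_or_lt' with h0 | h0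
    · simp [h0, hzero v hv h0]
    · rw [div_le_iff₀ h0]
      linarith [hsq v hv]
  have hmass : ∑ v ∈ s, (2 * q v - q' v + θ ^ 2 * q' v) = 1 + θ ^ 2 := by
    rw [sum_add_distrib, sum_sub_distrib, ← mul_sum, ← mul_sum, hsum, hsum']
    ring
  have hnonneg : ∀ v ∈ s, 0 ≤ q' v * f v ^ 2 := fun v hv => mul_nonneg (hq' v hv) (sq_nonneg _)
  calc (∑ v ∈ s, q v * f v) ^ 2 ≤ (∑ v ∈ s, q v ^ 2 / q' v) * ∑ v ∈ s, q' v * f v ^ 2 := by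
        refine sum_sq_le_sum_mul_sum_of_sq_le_mul s
          (fun v hv => div_nonneg (sq_nonneg _) (hq' v hv)) hnonneg fun v hv => ?_
        rcases (hq' v hv).eq_or_lt' with h0 | h0
        · simp [hzero v hv h0]
        · exact le_of_eq (by field_simp)
    _ ≤ (1 + θ ^ 2) * ∑ v ∈ s, q' v * f v ^ 2 :=
        mul_le_mul_of_nonneg_right ((sum_le_sum hdiv).trans_eq hmass) (sum_nonneg hnonneg)

theorem abs_div_sum_sub_div_sum_le {ι : Type*} {s : Finset ι} {β β' : ι → ℝ} {E : ℝ} (hE : 1 ≤ E)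
    (hβ' : ∀ v ∈ s, 0 ≤ β' v) (hpos : 0 < ∑ v ∈ s, β v) (hpos' : 0 < ∑ v ∈ s, β' v)
    (h : ∀ v ∈ s, ∀ w ∈ s, β v * β' w ≤ E * (β' v * β w)) {v : ι} (hv : v ∈ s) :
    |β v / ∑ w ∈ s, β w - β' v / ∑ w ∈ s, β' w| ≤ (E - 1) * (β' v / ∑ w ∈ s, β' w) := by
  have hupper : β v / ∑ w ∈ s, β w ≤ E * (β' v / ∑ w ∈ s, β' w) := by
    rw [← mul_div_assoc, div_le_div_iff₀ hpos hpos', mul_assoc, mul_sum, mul_sum, mul_sum]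
    exact sum_le_sum fun w hw => h v hv w hw
  have hlower : β' v / ∑ w ∈ s, β' w ≤ E * (β v / ∑ w ∈ s, β w) := by
    rw [← mul_div_assoc, div_le_div_iff₀ hpos' hpos, mul_assoc, mul_sum, mul_sum, mul_sum]
    exact sum_le_sum fun w hw => by linarith [h w hw v hv]
  have hq' : 0 ≤ β' v / ∑ w ∈ s, β' w := div_nonneg (hβ' v hv) hpos'.le
  refine abs_le.mpr ⟨?_, by linarith⟩
  rcases le_total (β' v / ∑ w ∈ s, β' w) (β v / ∑ w ∈ s, β w) with hle | hle
  · linarith [mul_nonneg (sub_nonneg.mpr hE) hq']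
  · linarith [mul_le_mul_of_nonneg_left hle (sub_nonneg.mpr hE)]

theorem one_add_sq_exp_sub_one_le {s : ℝ} (hs : 0 ≤ s) :
    1 + (Real.exp s - 1) ^ 2 ≤ Real.exp (4 * s ^ 2) := by
  have hexp : 1 ≤ Real.exp s := Real.one_le_exp hs
  rcases le_total s 1 with hs1 | hs1
  · have hquad := (abs_le.mp (Real.abs_exp_sub_one_sub_id_le (abs_le.mpr ⟨by linarith, hs1⟩))).2
    have hlin : Real.exp s - 1 ≤ 2 * s := by nlinarith
    calc 1 + (Real.exp s - 1) ^ 2 ≤ 1 + (2 * s) ^ 2 := by gcongr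
      _ = 4 * s ^ 2 + 1 := by ring
      _ ≤ Real.exp (4 * s ^ 2) := Real.add_one_le_exp _
  · calc 1 + (Real.exp s - 1) ^ 2 ≤ Real.exp s ^ 2 := by linarith
      _ = Real.exp (2 * s) := by rw [← Real.exp_nat_mul, Nat.cast_ofNat]
      _ ≤ Real.exp (4 * s ^ 2) := Real.exp_le_exp.mpr (by nlinarith)

variable {G : Type*} {V : Finset G} {b b' : G → G → ℝ} {θ : G → ℝ} {κ : ℝ}

/-- The weights `b'` are those of `b` multiplied by `exp (θ x)`, `x` the starting point of the
edge, up to a factor between `exp (-κ)` and `exp κ`. -/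
structure IsTilt (V : Finset G) (θ : G → ℝ) (κ : ℝ) (b b' : G → G → ℝ) : Prop where
  lower : ∀ x, ∀ v ∈ V, Real.exp (θ x - κ) * b x v ≤ b' x v
  upper : ∀ x, ∀ v ∈ V, b' x v ≤ Real.exp (θ x + κ) * b x v

namespace IsTilt

variable (h : IsTilt V θ κ b b')
include h

theorem le_outflow (x : G) : Real.exp (θ x - κ) * outflow V b x ≤ outflow V b' x := by
  rw [outflow, outflow, mul_sum]
  exact sum_le_sum (h.lower x)

theorem outflow_le (x : G) : outflow V b' x ≤ Real.exp (θ x + κ) * outflow V b x := by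
  rw [outflow, outflow, mul_sum]
  exact sum_le_sum (h.upper x)

theorem mul_le_mul (hb : ∀ x v, 0 ≤ b x v) (x : G) {v w : G} (hv : v ∈ V) (hw : w ∈ V) :
    b x v * b' x w ≤ Real.exp (2 * κ) * (b' x v * b x w) := by
  have hb_v := hb x v
  have hb_w := hb x w
  calc b x v * b' x w ≤ b x v * (Real.exp (θ x + κ) * b x w) := by
        gcongr
        exact h.upper x w hw
    _ = Real.exp (2 * κ) * (Real.exp (θ x - κ) * b x v * b x w) := by
        rw [show θ x + κ = 2 * κ + (θ x - κ) by ring, Real.exp_add]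
        ring
    _ ≤ Real.exp (2 * κ) * (b' x v * b x w) := by
        gcongr
        exact h.lower x v hv

variable [AddCommGroup G] (hb : BalancedFlow V b) (hb' : BalancedFlow V b') (hκ : 0 ≤ κ)
include hb hb' hκ

theorem sq_walkOp_le (f : G → ℝ) :
    walkOp V b f ^ 2 ≤ Real.exp (16 * κ ^ 2) • walkOp V b' (f ^ 2) := fun x => by
  have hwalk : ∀ (β : G → G → ℝ) (g : G → ℝ),
      ∑ v ∈ V, β x v / outflow V β x * g (x + v) = walkOp V β g x := fun β g => by
    simp only [walkOp_apply, mul_sum, div_eq_inv_mul, mul_assoc]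
  have hprob := sq_sum_mul_le_of_abs_sub_le (s := V) (q := fun v => b x v / outflow V b x)
    (q' := fun v => b' x v / outflow V b' x)
    (fun v _ => div_nonneg (hb'.nonneg x v) (hb'.outflow_nonneg x))
    (by rw [← sum_div]; exact div_self (hb.outflow_pos x).ne')
    (by rw [← sum_div]; exact div_self (hb'.outflow_pos x).ne')
    (fun v hv => abs_div_sum_sub_div_sum_le (Real.one_le_exp (by positivity))
      (fun v _ => hb'.nonneg x v) (hb.outflow_pos x) (hb'.outflow_pos x)
      (fun v hv w hw => h.mul_le_mul hb.nonneg x hv hw) hv) fun v => f (x + v)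
  have hnonneg : 0 ≤ walkOp V b' (f ^ 2) x := hb'.pow_walkOp_nonneg (fun _ => sq_nonneg _) 1 x
  rw [hwalk b f, hwalk b' fun z => f z ^ 2] at hprob
  calc walkOp V b f x ^ 2
      ≤ (1 + (Real.exp (2 * κ) - 1) ^ 2) * walkOp V b' (f ^ 2) x := hprob
    _ ≤ Real.exp (4 * (2 * κ) ^ 2) * walkOp V b' (f ^ 2) x := by
        gcongr
        exact one_add_sq_exp_sub_one_le (by positivity)
    _ = Real.exp (16 * κ ^ 2) * walkOp V b' (f ^ 2) x := by ring_nf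

theorem weightedSum_sq_pow_walkOp_le {f : G → ℝ} (hf : f.HasFiniteSupport) (m : ℕ) :
    weightedSum (outflow V b') ((walkOp V b ^ m) f ^ 2) ≤
      Real.exp (16 * κ ^ 2 * m) * weightedSum (outflow V b') (f ^ 2) := by
  induction m with
  | zero => simp
  | succ m ih =>
    set g := (walkOp V b ^ m) f
    have hgf : g.HasFiniteSupport := by fun_prop
    have hsucc : (walkOp V b ^ (m + 1)) f = walkOp V b g := by
      rw [pow_succ', Module.End.mul_apply]
    rw [hsucc]
    calc weightedSum (outflow V b') (walkOp V b g ^ 2)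
        ≤ weightedSum (outflow V b') (Real.exp (16 * κ ^ 2) • walkOp V b' (g ^ 2)) :=
          weightedSum_mono hb'.outflow_nonneg (by fun_prop) (by fun_prop)
            (h.sq_walkOp_le hb hb' hκ g)
      _ = Real.exp (16 * κ ^ 2) * weightedSum (outflow V b') (g ^ 2) := by
          rw [weightedSum_smul, hb'.weightedSum_walkOp (by fun_prop)]
      _ ≤ Real.exp (16 * κ ^ 2) *
            (Real.exp (16 * κ ^ 2 * m) * weightedSum (outflow V b') (f ^ 2)) := by gcongr
      _ = Real.exp (16 * κ ^ 2 * (m + 1 : ℕ)) * weightedSum (outflow V b') (f ^ 2) := by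
          rw [← mul_assoc, ← Real.exp_add]
          push_cast
          ring_nf

theorem weightedSum_exp_mul_sq_pow_walkOp_le {f : G → ℝ} (hf : f.HasFiniteSupport) (m : ℕ) :
    weightedSum (outflow V b) (fun x => Real.exp (θ x) * (walkOp V b ^ m) f x ^ 2) ≤
      Real.exp (2 * κ + 16 * κ ^ 2 * m) *
        weightedSum (outflow V b) (fun x => Real.exp (θ x) * f x ^ 2) := by
  have : ((walkOp V b ^ m) f).HasFiniteSupport := by fun_prop
  calc weightedSum (outflow V b) (fun x => Real.exp (θ x) * (walkOp V b ^ m) f x ^ 2)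
      ≤ weightedSum (outflow V b') (Real.exp κ • (walkOp V b ^ m) f ^ 2) := by
        refine weightedSum_le_weightedSum (by fun_prop) (by fun_prop) fun x => ?_
        calc outflow V b x * (Real.exp (θ x) * (walkOp V b ^ m) f x ^ 2)
            = Real.exp (θ x - κ) * outflow V b x * (Real.exp κ * (walkOp V b ^ m) f x ^ 2) := by
              rw [Real.exp_sub]
              field_simp
          _ ≤ outflow V b' x * (Real.exp κ * (walkOp V b ^ m) f x ^ 2) := by
              gcongr
              exact h.le_outflow x
    _ ≤ Real.exp κ * (Real.exp (16 * κ ^ 2 * m) * weightedSum (outflow V b') (f ^ 2)) := by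
        rw [weightedSum_smul]
        gcongr
        exact h.weightedSum_sq_pow_walkOp_le hb hb' hκ hf m
    _ ≤ Real.exp κ * (Real.exp (16 * κ ^ 2 * m) * weightedSum (outflow V b)
          (Real.exp κ • fun x => Real.exp (θ x) * f x ^ 2)) := by
        gcongr
        refine weightedSum_le_weightedSum (by fun_prop) (by fun_prop) fun x => ?_
        calc outflow V b' x * f x ^ 2 ≤ Real.exp (θ x + κ) * outflow V b x * f x ^ 2 := by
              gcongr
              exact h.outflow_le x
          _ = outflow V b x * (Real.exp κ * (Real.exp (θ x) * f x ^ 2)) := by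
              rw [Real.exp_add]
              ring
    _ = _ := by
        rw [weightedSum_smul, two_mul, Real.exp_add, Real.exp_add]
        ring

end IsTilt

end Tilt

section HalfSpace

theorem indicator_sq {α : Type*} (s : Set α) (f : α → ℝ) :
    s.indicator f ^ 2 = s.indicator (f ^ 2) :=
  (Set.indicator_comp_of_zero (g := fun a : ℝ => a ^ 2) (by simp)).symm

variable {G : Type*} [AddCommGroup G] {V : Finset G} {b : G → G → ℝ} {φ : G →+ ℝ} {B : ℝ}

/-- Every exponential reweighting of `b` along `φ` is comparable to a balanced flow, with an error
controlled by `B`; this replaces the symmetry of the walk in the exponential weight method. -/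
def HasTilts (V : Finset G) (φ : G →+ ℝ) (B : ℝ) (b : G → G → ℝ) : Prop :=
  ∀ t : ℝ, ∃ b', BalancedFlow V b' ∧ IsTilt V (fun x => t * φ x) (B * |t|) b b'

theorem HasTilts.neg (h : HasTilts V φ B b) : HasTilts V (-φ) B b := fun t => by
  simpa only [AddMonoidHom.neg_apply, neg_mul_comm, abs_neg] using h (-t)

theorem neg_mul_add_le_one_sub_sq_div (hB : 0 < B) (ρ : ℝ) {k t : ℝ} (hk : 0 ≤ k)
    (ht : t = ρ / (32 * B ^ 2 * (k + 1))) :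
    -(t * ρ) + (2 * (B * t) + 16 * (B * t) ^ 2 * k) ≤ 1 - ρ ^ 2 / (64 * B ^ 2 * (k + 1)) := by
  have hoptimal : -(t * ρ) + 16 * (B * t) ^ 2 * (k + 1) = -(ρ ^ 2 / (64 * B ^ 2 * (k + 1))) := by
    rw [ht]
    field_simp
    ring
  nlinarith [sq_nonneg (B * t - 1)]

theorem HasTilts.weightedSum_indicator_sq_pow_walkOp_le (h : HasTilts V φ B b) (hB : 0 < B)
    (hb : BalancedFlow V b) {f : G → ℝ} (hf : f.HasFiniteSupport) {r s : ℝ} (hsr : s ≤ r)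
    (hfs : ∀ x, s ≤ φ x → f x = 0) (k : ℕ) :
    weightedSum (outflow V b) ({x | r ≤ φ x}.indicator ((walkOp V b ^ k) f ^ 2)) ≤
      Real.exp (1 - (r - s) ^ 2 / (64 * B ^ 2 * (k + 1))) * weightedSum (outflow V b) (f ^ 2) := by
  obtain ⟨t, ht⟩ : ∃ t, t = (r - s) / (32 * B ^ 2 * (k + 1)) := ⟨_, rfl⟩
  have ht0 : 0 ≤ t := ht ▸ div_nonneg (sub_nonneg.mpr hsr) (by positivity)
  obtain ⟨b', hb', htilt⟩ := h t
  rw [abs_of_nonneg ht0] at htilt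
  have : ((walkOp V b ^ k) f).HasFiniteSupport := by fun_prop
  have hmass : 0 ≤ weightedSum (outflow V b) (f ^ 2) :=
    weightedSum_nonneg hb.outflow_nonneg fun _ => sq_nonneg _
  calc weightedSum (outflow V b) ({x | r ≤ φ x}.indicator ((walkOp V b ^ k) f ^ 2))
      ≤ weightedSum (outflow V b)
          (Real.exp (-(t * r)) • fun x => Real.exp (t * φ x) * (walkOp V b ^ k) f x ^ 2) := by
        refine weightedSum_mono hb.outflow_nonneg (by fun_prop) (by fun_prop) fun x => ?_
        change _ ≤ Real.exp (-(t * r)) * (Real.exp (t * φ x) * (walkOp V b ^ k) f x ^ 2)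
        refine Set.indicator_apply_le' (fun hx => ?_) fun _ => by positivity
        rw [← mul_assoc, ← Real.exp_add]
        refine le_mul_of_one_le_left (sq_nonneg _) (Real.one_le_exp ?_)
        linarith [mul_le_mul_of_nonneg_left (Set.mem_ofPred.mp hx) ht0]
    _ ≤ Real.exp (-(t * r)) * (Real.exp (2 * (B * t) + 16 * (B * t) ^ 2 * k) *
          weightedSum (outflow V b) (Real.exp (t * s) • f ^ 2)) := by
        rw [weightedSum_smul]
        gcongr
        refine (htilt.weightedSum_exp_mul_sq_pow_walkOp_le hb hb' (by positivity) hf k).trans ?_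
        gcongr
        refine weightedSum_mono hb.outflow_nonneg (by fun_prop) (by fun_prop) fun x => ?_
        change _ ≤ Real.exp (t * s) * f x ^ 2
        rcases le_total s (φ x) with hx | hx
        · simp [hfs x hx]
        · gcongr
    _ = Real.exp (-(t * (r - s)) + (2 * (B * t) + 16 * (B * t) ^ 2 * k)) *
          weightedSum (outflow V b) (f ^ 2) := by
        simp only [weightedSum_smul, mul_sub, neg_sub', sub_neg_eq_add, Real.exp_add]
        ring
    _ ≤ _ := by
        gcongr
        exact neg_mul_add_le_one_sub_sq_div hB _ k.cast_nonneg ht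

variable [DecidableEq G]

/-- The squared `L²` mass of the heat kernel with target `y` over the half space of all `x` with
`φ (x - y) ≥ r`. -/
def halfSpaceMass (V : Finset G) (b : G → G → ℝ) (φ : G →+ ℝ) (y : G) (r : ℝ) (n : ℕ) : ℝ :=
  weightedSum (outflow V b) ({x | φ y + r ≤ φ x}.indicator (heatKernel V b n y ^ 2))

theorem halfSpaceMass_zero_eq_zero (y : G) {r : ℝ} (hr : 0 < r) :
    halfSpaceMass V b φ y r 0 = 0 := by
  have hzero : {x | φ y + r ≤ φ x}.indicator (heatKernel V b 0 y ^ 2) = 0 := by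
    refine Set.indicator_eq_zero'.mpr (Set.disjoint_left.mpr fun x hx hxr => ?_)
    have hne : x ≠ y := by
      rintro rfl
      exact absurd (Set.mem_ofPred.mp hxr) (by linarith)
    exact hx (by simp [heatKernel, hne])
  simp [halfSpaceMass, hzero, weightedSum]

theorem halfSpaceMass_le_weightedSum (hb : BalancedFlow V b) (y : G) (r : ℝ) (n : ℕ) :
    halfSpaceMass V b φ y r n ≤ weightedSum (outflow V b) (heatKernel V b n y ^ 2) :=
  weightedSum_mono hb.outflow_nonneg (by fun_prop) (by fun_prop)
    (Set.indicator_le_self' fun _ _ => sq_nonneg _)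

-- The heat kernel at time `m` is cut along `{φ x = φ y + s}`: the part beyond contributes at most
-- its own mass, and the remaining part has to travel a distance `r - s` in `k` steps.
theorem HasTilts.halfSpaceMass_add_le (h : HasTilts V φ B b) (hB : 0 < B) (hb : BalancedFlow V b)
    (y : G) {r s : ℝ} (hsr : s ≤ r) (m k : ℕ) :
    halfSpaceMass V b φ y r (m + k) ≤ 2 * halfSpaceMass V b φ y s m +
      2 * (Real.exp (1 - (r - s) ^ 2 / (64 * B ^ 2 * (k + 1))) *
        weightedSum (outflow V b) (heatKernel V b m y ^ 2)) := by
  set H := {x | φ y + s ≤ φ x}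
  set h_m := heatKernel V b m y with hm
  have hfin : h_m.HasFiniteSupport := by fun_prop
  set near := Hᶜ.indicator h_m
  set far := H.indicator h_m
  have hnear : near.HasFiniteSupport := by fun_prop
  have hfar : far.HasFiniteSupport := by fun_prop
  have hsplit : heatKernel V b (m + k) y = (walkOp V b ^ k) far + (walkOp V b ^ k) near := by
    rw [← map_add, Set.indicator_self_add_compl, hm, pow_walkOp_heatKernel, add_comm]
  have hfar_le : weightedSum (outflow V b) ((walkOp V b ^ k) far ^ 2) ≤
      halfSpaceMass V b φ y s m := by
    refine (hb.weightedSum_sq_pow_walkOp_le hfar k).trans_eq ?_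
    rw [halfSpaceMass, indicator_sq]
  have hnear_le := h.weightedSum_indicator_sq_pow_walkOp_le hB hb hnear
    (add_le_add_right hsr (φ y)) (fun x hx => Set.indicator_of_notMem (not_not.mpr hx) _) k
  have hnear_sq : weightedSum (outflow V b) (near ^ 2) ≤ weightedSum (outflow V b) (h_m ^ 2) := by
    refine weightedSum_mono hb.outflow_nonneg (by fun_prop) (by fun_prop) ?_
    rw [indicator_sq]
    exact Set.indicator_le_self' fun _ _ => sq_nonneg _
  rw [add_sub_add_left_eq_sub] at hnear_le
  calc halfSpaceMass V b φ y r (m + k)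
      ≤ weightedSum (outflow V b) ((2 : ℝ) • (walkOp V b ^ k) far ^ 2 +
          (2 : ℝ) • {x | φ y + r ≤ φ x}.indicator ((walkOp V b ^ k) near ^ 2)) := by
        refine weightedSum_mono hb.outflow_nonneg (by fun_prop) (by fun_prop) fun x => ?_
        simp only [hsplit, Set.indicator_apply, Pi.add_apply, Pi.smul_apply, Pi.pow_apply,
          smul_eq_mul]
        split_ifs with hx
        · linarith [add_sq_le (a := (walkOp V b ^ k) far x) (b := (walkOp V b ^ k) near x)]
        · positivity
    _ ≤ _ := by
        rw [weightedSum_add (by fun_prop) (by fun_prop), weightedSum_smul, weightedSum_smul]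
        grw [hfar_le, hnear_le, hnear_sq]

end HalfSpace

section GaussianDecay

/-- A positive rate `ψ` which loses at most a factor `Θ` when the time is halved. -/
structure IsDoubling (Θ : ℝ) (ψ : ℕ → ℝ) : Prop where
  pos : ∀ n, 0 < ψ n
  le_mul : ∀ m n, n + 1 ≤ 2 * (m + 1) → ψ m ≤ Θ * ψ n

theorem IsDoubling.one_le {Θ : ℝ} {ψ : ℕ → ℝ} (h : IsDoubling Θ ψ) : 1 ≤ Θ :=
  le_of_mul_le_mul_right (by simpa using h.le_mul 0 0 (by norm_num)) (h.pos 0)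

theorem isDoubling_inv_sqrt_pow (d : ℕ) : IsDoubling (√2 ^ d) fun n => (√(n + 1) ^ d)⁻¹ where
  pos n := by positivity
  le_mul m n hmn := by
    rw [← div_eq_mul_inv, le_div_iff₀ (by positivity), inv_mul_le_iff₀ (by positivity), ← mul_pow,
      ← Real.sqrt_mul (by positivity)]
    gcongr
    rw [mul_comm]
    exact_mod_cast hmn

variable {Θ D A₀ A : ℝ} {ψ : ℕ → ℝ}

theorem six_fifths_mul_sq_div_le (hD : 0 < D) (r : ℝ) {m n : ℕ} (hmn : 3 * (m + 1) ≤ 2 * (n + 1)) :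
    6 / 5 * (r ^ 2 / (100 * D * (n + 1))) ≤ (9 / 10 * r) ^ 2 / (100 * D * (m + 1)) := by
  have hmn' : 3 * ((m : ℝ) + 1) ≤ 2 * (n + 1) := by exact_mod_cast hmn
  rw [mul_div_assoc', div_le_div_iff₀ (by positivity) (by positivity)]
  have := mul_le_mul_of_nonneg_left hmn' (by positivity : 0 ≤ 40 * D * r ^ 2)
  nlinarith [this, mul_nonneg hD.le (sq_nonneg r)]

theorem sq_div_le_sq_sub_div (hD : 0 < D) (r : ℝ) {k n : ℕ} (hkn : k ≤ n) :
    r ^ 2 / (100 * D * (n + 1)) ≤ (r - 9 / 10 * r) ^ 2 / (D * (k + 1)) :=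
  calc r ^ 2 / (100 * D * (n + 1)) ≤ r ^ 2 / (100 * D * (k + 1)) := by gcongr
    _ = _ := by field_simp; ring

theorem exp_neg_six_fifths_mul_le (hΘ : 0 < Θ) {X : ℝ} (hX : 5 * Real.log (4 * Θ) ≤ X) :
    Real.exp (-(6 / 5 * X)) ≤ (4 * Θ)⁻¹ * Real.exp (-X) := by
  rw [← Real.exp_log (by positivity : 0 < (4 * Θ)⁻¹), Real.log_inv, ← Real.exp_add]
  exact Real.exp_le_exp.mpr (by linarith)

-- The mass beyond `r` at time `n` is compared with the mass beyond `9 r / 10` at time `n / 2`.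
-- The bound to be proved improves by the factor `exp (-X / 5)` under this change, which outweighs
-- the constants lost unless the exponent `X` is so small that there is nothing to prove.
theorem IsDoubling.le_gaussian (hψ : IsDoubling Θ ψ) (hD : 0 < D) (hA₀ : 0 < A₀)
    (hA : A₀ * Real.exp (5 * Real.log (4 * Θ)) ≤ A) (hA' : 4 * Real.exp 1 * A₀ * Θ ≤ A)
    {J : ℝ → ℕ → ℝ} {α : ℕ → ℝ} (hα : ∀ n, α n ≤ A₀ * ψ n) (hJ0 : ∀ r, 0 < r → J r 0 ≤ 0)
    (hJα : ∀ r n, J r n ≤ α n)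
    (hJ : ∀ r s, s ≤ r → ∀ m k : ℕ, J r (m + k) ≤ 2 * J s m +
      2 * (Real.exp (1 - (r - s) ^ 2 / (D * (k + 1))) * α m))
    (n : ℕ) {r : ℝ} (hr : 0 ≤ r) :
    J r n ≤ A * ψ n * Real.exp (-(r ^ 2 / (100 * D * (n + 1)))) := by
  have hΘ : 1 ≤ Θ := hψ.one_le
  have hA0 : 0 < A := lt_of_lt_of_le (by positivity) hA
  induction n using Nat.strong_induction_on generalizing r with
  | _ n ih =>
    have hψn := hψ.pos n
    rcases le_or_gt (r ^ 2 / (100 * D * (n + 1))) (5 * Real.log (4 * Θ)) with hX | hX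
    · calc J r n ≤ A₀ * ψ n := (hJα r n).trans (hα n)
        _ = A₀ * Real.exp (5 * Real.log (4 * Θ)) * ψ n * Real.exp (-(5 * Real.log (4 * Θ))) := by
            rw [Real.exp_neg]
            field_simp
        _ ≤ _ := by grw [hA, ← hX]
    obtain rfl | hn := Nat.eq_zero_or_pos n
    · have hlog : 0 ≤ Real.log (4 * Θ) := Real.log_nonneg (by linarith)
      have hr0 : 0 < r := hr.lt_of_ne' fun h0 => by norm_num [h0] at hX; linarith
      exact (hJ0 r hr0).trans (by positivity)
    obtain ⟨m, k, rfl, hm, hk, hm_le, hm_ge⟩ : ∃ m k, n = m + k ∧ m < n ∧ k ≤ n ∧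
        3 * (m + 1) ≤ 2 * (n + 1) ∧ n + 1 ≤ 2 * (m + 1) :=
      ⟨n / 2, n - n / 2, by omega, by omega, by omega, by omega, by omega⟩
    have hψm := hψ.le_mul m (m + k) hm_ge
    set X := r ^ 2 / (100 * D * ((m + k : ℕ) + 1))
    have hfar : J (9 / 10 * r) m ≤ A / 4 * ψ (m + k) * Real.exp (-X) :=
      calc J (9 / 10 * r) m
          ≤ A * ψ m * Real.exp (-((9 / 10 * r) ^ 2 / (100 * D * (m + 1)))) :=
            ih m hm (by positivity)
        _ ≤ A * (Θ * ψ (m + k)) * ((4 * Θ)⁻¹ * Real.exp (-X)) := by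
            grw [hψm, ← six_fifths_mul_sq_div_le hD r hm_le,
              exp_neg_six_fifths_mul_le (by linarith) hX.le]
        _ = A / 4 * ψ (m + k) * Real.exp (-X) := by field_simp
    have hnear : Real.exp (1 - (r - 9 / 10 * r) ^ 2 / (D * (k + 1))) * α m ≤
        A / 4 * ψ (m + k) * Real.exp (-X) :=
      calc Real.exp (1 - (r - 9 / 10 * r) ^ 2 / (D * (k + 1))) * α m
          ≤ Real.exp (1 + -X) * (A₀ * (Θ * ψ (m + k))) := by
            grw [hα m, hψm, ← sq_div_le_sq_sub_div hD r hk, sub_eq_add_neg]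
        _ = 4 * Real.exp 1 * A₀ * Θ / 4 * ψ (m + k) * Real.exp (-X) := by rw [Real.exp_add]; ring
        _ ≤ A / 4 * ψ (m + k) * Real.exp (-X) := by gcongr
    linarith [hJ r (9 / 10 * r) (by linarith) m k]

end GaussianDecay
section Reversal

variable {G : Type*} [AddCommGroup G] {V : Finset G} {b : G → G → ℝ} {φ : G →+ ℝ} {B B' : ℝ}

theorem HasTilts.mono (h : HasTilts V φ B b) (hb : BalancedFlow V b) (hB : B ≤ B') :
    HasTilts V φ B' b := fun t => by
  obtain ⟨b', hb', htilt⟩ := h t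
  refine ⟨b', hb', ⟨fun x v hv => ?_, fun x v hv => ?_⟩⟩
  · grw [← htilt.lower x v hv, hB]
    exact hb.nonneg x v
  · grw [htilt.upper x v hv, hB]
    exact hb.nonneg x v

theorem HasTilts.reverse [DecidableEq G] (h : HasTilts V φ B b) (hb : BalancedFlow V b) {R : ℝ}
    (hR : ∀ v ∈ V, |φ v| ≤ R) : HasTilts (-V) φ (B + R) (reverseFlow b) := fun t => by
  obtain ⟨b', hb', htilt⟩ := h t
  have hshift : ∀ v ∈ -V, |t * φ v| ≤ R * |t| := fun v hv => by
    rw [abs_mul, mul_comm, ← abs_neg (φ v), ← map_neg]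
    exact mul_le_mul_of_nonneg_right (hR _ (mem_neg'.mp hv)) (abs_nonneg t)
  refine ⟨reverseFlow b', hb'.reverse, ⟨fun x v hv => ?_, fun x v hv => ?_⟩⟩
  · refine le_trans ?_ (htilt.lower (x + v) (-v) (mem_neg'.mp hv))
    refine mul_le_mul_of_nonneg_right (Real.exp_le_exp.mpr ?_) (hb.nonneg _ _)
    rw [map_add]
    linarith [abs_le.mp (hshift v hv)]
  · refine (htilt.upper (x + v) (-v) (mem_neg'.mp hv)).trans ?_
    refine mul_le_mul_of_nonneg_right (Real.exp_le_exp.mpr ?_) (hb.nonneg _ _)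
    rw [map_add]
    linarith [abs_le.mp (hshift v hv)]

variable {d : ℕ} {W : Finset (Zd d)} {w : Zd d → Zd d → ℝ} {c C ε ε' : ℝ} {N : ℕ}

theorem EllipticFlow.mono (hw : EllipticFlow W w c C ε N) (hε : ε' ≤ ε) :
    EllipticFlow W w c C ε' N where
  __ := hw
  irred x e he := by
    obtain ⟨m, hm, h⟩ := hw.irred x e he
    exact ⟨m, hm, hε.trans h⟩

theorem EllipticFlow.reverse (hw : EllipticFlow W w c C ε N) (hε : 0 ≤ ε) :
    EllipticFlow (-W) (reverseFlow w) c C (c / C * ε) N where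
  toBalancedFlow := hw.toBalancedFlow.reverse
  le_outflow := hw.outflow_reverseFlow ▸ hw.le_outflow
  outflow_le := hw.outflow_reverseFlow ▸ hw.outflow_le
  irred x e he := by
    obtain ⟨m, hm, h⟩ := hw.irred (x + e) (-e) (by simpa [eucNorm] using he)
    rw [add_neg_cancel_right] at h
    refine ⟨m, hm, ?_⟩
    rw [div_mul_eq_mul_div, div_le_iff₀' hw.upper_pos]
    calc c * ε ≤ outflow W w (x + e) * heatKernel W w m x (x + e) :=
          mul_le_mul (hw.le_outflow _) h hε (hw.outflow_nonneg _)
      _ = outflow W w x * heatKernel (-W) (reverseFlow w) m (x + e) x :=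
          (hw.outflow_mul_heatKernel_reverse m x (x + e)).symm
      _ ≤ C * heatKernel (-W) (reverseFlow w) m (x + e) x :=
          mul_le_mul_of_nonneg_right (hw.outflow_le x)
            (hw.toBalancedFlow.reverse.heatKernel_nonneg m _ x)

end Reversal

section GaussianBound

theorem weightedSum_mul_le_of_union_eq_univ {α : Type*} {μ f g : α → ℝ} (hμ : 0 ≤ μ)
    (hf : f.HasFiniteSupport) (hg : g.HasFiniteSupport) (hf0 : 0 ≤ f) (hg0 : 0 ≤ g) {s t : Set α}
    (hst : s ∪ t = Set.univ) {a : ℝ} (ha : 0 ≤ a)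
    (hs : weightedSum μ (s.indicator (f ^ 2)) * weightedSum μ (g ^ 2) ≤ a ^ 2)
    (ht : weightedSum μ (f ^ 2) * weightedSum μ (t.indicator (g ^ 2)) ≤ a ^ 2) :
    weightedSum μ (f * g) ≤ 2 * a := by
  rw [← indicator_sq] at hs ht
  calc weightedSum μ (f * g)
      ≤ weightedSum μ (s.indicator f * g + f * t.indicator g) := by
        refine weightedSum_mono hμ (by fun_prop) (by fun_prop) fun x => ?_
        have : 0 ≤ f x * g x := mul_nonneg (hf0 x) (hg0 x)
        rcases (hst ▸ Set.mem_univ x : x ∈ s ∪ t) with hx | hx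
        · simpa [hx] using mul_nonneg (hf0 x) (Set.indicator_apply_nonneg fun _ => hg0 x)
        · simpa [hx] using mul_nonneg (Set.indicator_apply_nonneg fun _ => hf0 x) (hg0 x)
    _ = weightedSum μ (s.indicator f * g) + weightedSum μ (f * t.indicator g) :=
        weightedSum_add (by fun_prop) (by fun_prop)
    _ ≤ a + a := by
        gcongr
        · exact (abs_le_of_sq_le_sq' ((sq_weightedSum_mul_le hμ (by fun_prop) hg).trans hs) ha).2
        · exact (abs_le_of_sq_le_sq' ((sq_weightedSum_mul_le hμ hf (by fun_prop)).trans ht) ha).2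
    _ = 2 * a := (two_mul a).symm

section HasGaussianMass

variable {G : Type*} [AddCommGroup G] [DecidableEq G] {V : Finset G} {b : G → G → ℝ}

/-- The squared `L²` mass of the heat kernel with target `y` is at most `α n` at time `n`, and its
part in the half spaces in direction `φ` has Gaussian tails with variance of order `D n`. -/
structure HasGaussianMass (V : Finset G) (b : G → G → ℝ) (φ : G →+ ℝ) (D : ℝ) (α : ℕ → ℝ)
    (y : G) : Prop where
  weightedSum_le : ∀ n, weightedSum (outflow V b) (heatKernel V b n y ^ 2) ≤ α n
  halfSpaceMass_le : ∀ n r, 0 ≤ r →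
    halfSpaceMass V b φ y r n ≤ α n * Real.exp (-(r ^ 2 / (D * (n + 1))))

theorem IsDoubling.const_mul {Θ a : ℝ} {ψ : ℕ → ℝ} (hψ : IsDoubling Θ ψ) (ha : 0 < a) :
    IsDoubling Θ fun n => a * ψ n where
  pos n := mul_pos ha (hψ.pos n)
  le_mul m n hmn := by
    rw [mul_left_comm]
    exact mul_le_mul_of_nonneg_left (hψ.le_mul m n hmn) ha.le

theorem HasGaussianMass.weightedSum_mul_halfSpaceMass_le {V' : Finset G} {b' : G → G → ℝ}
    {φ φ' : G →+ ℝ} {D Θ : ℝ} {α : ℕ → ℝ} {x y : G} (hα : IsDoubling Θ α) (hD : 0 < D)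
    (hb' : BalancedFlow V' b') (h : HasGaussianMass V b φ D α y)
    (h' : HasGaussianMass V' b' φ' D α x) {r : ℝ} (hr : 0 ≤ r)
    {m k n : ℕ} (hm : n + 1 ≤ 2 * (m + 1)) (hk : n + 1 ≤ 2 * (k + 1)) (hkn : k ≤ n) :
    weightedSum (outflow V' b') (heatKernel V' b' m x ^ 2) * halfSpaceMass V b φ y r k ≤
      (Θ * α n * Real.exp (-(r ^ 2 / (2 * D * (n + 1))))) ^ 2 := by
  have hαn := hα.pos n
  have hαk := hα.pos k
  have hΘ := hα.one_le
  have hexp : r ^ 2 / (D * (n + 1)) = 2 * (r ^ 2 / (2 * D * (n + 1))) := by field_simp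
  calc weightedSum (outflow V' b') (heatKernel V' b' m x ^ 2) * halfSpaceMass V b φ y r k
      ≤ α m * (α k * Real.exp (-(r ^ 2 / (D * (k + 1))))) := by
        grw [h.halfSpaceMass_le k r hr, h'.weightedSum_le]
        exact weightedSum_nonneg hb'.outflow_nonneg fun _ => sq_nonneg _
    _ ≤ Θ * α n * (Θ * α n * Real.exp (-(r ^ 2 / (D * (n + 1))))) := by
        grw [hα.le_mul m n hm, hα.le_mul k n hk, hkn]
    _ = _ := by
        rw [mul_pow, ← Real.exp_nat_mul, mul_neg, Nat.cast_two, ← hexp]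
        ring

end HasGaussianMass

theorem BalancedFlow.outflow_mul_heatKernel_add_le {G : Type*} [AddCommGroup G] [DecidableEq G]
    {V : Finset G} {b : G → G → ℝ} (hb : BalancedFlow V b) (φ : G →+ ℝ) (m k : ℕ) (x y : G)
    {a : ℝ} (ha : 0 ≤ a)
    (hx : halfSpaceMass (-V) (reverseFlow b) (-φ) x ((φ x - φ y) / 2) m *
      weightedSum (outflow V b) (heatKernel V b k y ^ 2) ≤ a ^ 2)
    (hy : weightedSum (outflow (-V) (reverseFlow b)) (heatKernel (-V) (reverseFlow b) m x ^ 2) *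
      halfSpaceMass V b φ y ((φ x - φ y) / 2) k ≤ a ^ 2) :
    outflow V b x * heatKernel V b (m + k) y x ≤ 2 * a := by
  rw [halfSpaceMass, hb.outflow_reverseFlow] at hx hy
  rw [hb.outflow_mul_heatKernel_add]
  refine weightedSum_mul_le_of_union_eq_univ hb.outflow_nonneg (by fun_prop) (by fun_prop)
    (hb.reverse.heatKernel_nonneg m x) (hb.heatKernel_nonneg k y) ?_ ha hx hy
  refine Set.eq_univ_of_forall fun z => ?_
  rw [Set.mem_union, Set.mem_ofPred, Set.mem_ofPred, AddMonoidHom.neg_apply,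
    AddMonoidHom.neg_apply]
  by_contra! h
  linarith [h.1, h.2]

variable {d : ℕ} {c C ε : ℝ}

theorem exists_hasGaussianMass (hd : 0 < d) (hc : 0 < c) (hC : 0 < C) (hε : 0 < ε) (N : ℕ) :
    ∃ A, 0 < A ∧ ∀ V b, EllipticFlow (d := d) V b c C ε N → ∀ φ B, 0 < B → HasTilts V φ B b →
      ∀ y, HasGaussianMass V b φ (100 * (64 * B ^ 2)) (fun n => A * (√(n + 1) ^ d)⁻¹) y := by
  obtain ⟨A₀, hA₀, hdiag⟩ := exists_weightedSum_sq_heatKernel_le hd hc hC hε N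
  set Θ : ℝ := √2 ^ d
  set A := max (A₀ * Real.exp (5 * Real.log (4 * Θ))) (4 * Real.exp 1 * A₀ * Θ)
  have hΘ : 1 ≤ Θ := (isDoubling_inv_sqrt_pow d).one_le
  have hA₀A : A₀ ≤ A := (le_mul_of_one_le_right hA₀.le (Real.one_le_exp
    (mul_nonneg (by norm_num) (Real.log_nonneg (by linarith))))).trans (le_max_left _ _)
  refine ⟨A, hA₀.trans_le hA₀A, fun V b hb φ B hB h y => ⟨fun n => ?_, fun n r hr => ?_⟩⟩
  · grw [hdiag V b hb y n, hA₀A]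
  · exact (isDoubling_inv_sqrt_pow d).le_gaussian (by positivity) hA₀ (le_max_left _ _)
      (le_max_right _ _) (hdiag V b hb y) (fun r hr => (halfSpaceMass_zero_eq_zero y hr).le)
      (halfSpaceMass_le_weightedSum hb.toBalancedFlow y)
      (fun r s hsr m k => h.halfSpaceMass_add_le hB hb.toBalancedFlow y hsr m k) n hr

-- `p_n(x, y)` is split as a sum over the position at time `n / 2`, which is far from `x` or far
-- from `y` in the direction `φ`; the reversed walk describes the first half as seen from `x`.
theorem exists_heatKernel_le (hd : 0 < d) (hc : 0 < c) (hC : 0 < C) (hε : 0 < ε) (N : ℕ) :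
    ∃ A, 0 < A ∧ ∀ V b, EllipticFlow (d := d) V b c C ε N → ∀ (φ : Zd d →+ ℝ) B R, 0 < B → 0 ≤ R →
      HasTilts V φ B b → (∀ v ∈ V, |φ v| ≤ R) → ∀ x y, φ y ≤ φ x → ∀ n : ℕ, heatKernel V b n y x ≤
        A * (√(n + 1) ^ d)⁻¹ * Real.exp (-((φ x - φ y) ^ 2 / (51200 * (B + R) ^ 2 * (n + 1)))) := by
  obtain ⟨A, hA, hmass⟩ := exists_hasGaussianMass hd hc hC (ε := c / C * ε) (by positivity) N
  refine ⟨2 * (√2 ^ d * A) / c, by positivity, fun V b hb φ B R hB hR h hVR x y hxy n => ?_⟩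
  have hbal := hb.toBalancedFlow
  have hcC : c / C ≤ 1 := (div_le_one hC).mpr ((hb.le_outflow 0).trans (hb.outflow_le 0))
  have hy := hmass V b (hb.mono (mul_le_of_le_one_left hε.le hcC)) φ (B + R) (by positivity)
    (h.mono hbal (by linarith)) y
  have hx := hmass _ _ (hb.reverse hε.le) (-φ) (B + R) (by positivity) (h.reverse hbal hVR).neg x
  have hα := (isDoubling_inv_sqrt_pow d).const_mul hA
  have hr : 0 ≤ (φ x - φ y) / 2 := by linarith
  obtain ⟨m, k, rfl, hm, hk, hmn, hkn⟩ : ∃ m k, n = m + k ∧ n + 1 ≤ 2 * (m + 1) ∧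
      n + 1 ≤ 2 * (k + 1) ∧ m ≤ n ∧ k ≤ n :=
    ⟨n / 2, n - n / 2, by omega, by omega, by omega, by omega, by omega⟩
  have hexp : ((φ x - φ y) / 2) ^ 2 / (2 * (100 * (64 * (B + R) ^ 2)) * (((m + k : ℕ) : ℝ) + 1)) =
      (φ x - φ y) ^ 2 / (51200 * (B + R) ^ 2 * (((m + k : ℕ) : ℝ) + 1)) := by
    field_simp
    ring
  have hxy' := hx.weightedSum_mul_halfSpaceMass_le hα (by positivity) hbal hy hr hk hm hmn
  rw [mul_comm] at hxy'
  have hlocal := hbal.outflow_mul_heatKernel_add_le φ m k x y (by positivity) hxy'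
    (hy.weightedSum_mul_halfSpaceMass_le hα (by positivity)
      hbal.reverse hx hr hm hk hkn)
  rw [div_mul_eq_mul_div, div_mul_eq_mul_div, le_div_iff₀' hc]
  calc c * heatKernel V b (m + k) y x ≤ outflow V b x * heatKernel V b (m + k) y x :=
        mul_le_mul_of_nonneg_right (hb.le_outflow x) (hb.heatKernel_nonneg _ _ _)
    _ ≤ _ := hlocal
    _ = _ := by
        rw [hexp]
        ring

end GaussianBound
section Cycles

theorem eucNorm_nonneg {d : ℕ} (v : Zd d) : 0 ≤ eucNorm v := Real.sqrt_nonneg _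

theorem eucNorm_sub_comm {d : ℕ} (v w : Zd d) : eucNorm (v - w) = eucNorm (w - v) := by
  simp only [eucNorm, Pi.sub_apply, Int.cast_sub, sub_sq_comm]

theorem exists_addMonoidHom_eq_eucNorm {d : ℕ} (w : Zd d) :
    ∃ φ : Zd d →+ ℝ, (∀ v, |φ v| ≤ eucNorm v) ∧ φ w = eucNorm w := by
  let φ : Zd d →+ ℝ :=
    { toFun := fun v => (∑ i, (w i : ℝ) * v i) / eucNorm w
      map_zero' := by simp
      map_add' := fun u v => by simp [mul_add, sum_add_distrib, add_div] }
  refine ⟨φ, fun v => ?_, ?_⟩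
  · change |(∑ i, (w i : ℝ) * v i) / eucNorm w| ≤ eucNorm v
    rw [abs_div, abs_of_nonneg (eucNorm_nonneg w)]
    refine div_le_of_le_mul₀ (eucNorm_nonneg w) (eucNorm_nonneg v) ?_
    rw [mul_comm, eucNorm, eucNorm, ← Real.sqrt_mul (by positivity)]
    exact Real.abs_le_sqrt (sum_mul_sq_le_sq_mul_sq univ (fun i => (w i : ℝ)) fun i => (v i : ℝ))
  · change (∑ i, (w i : ℝ) * w i) / eucNorm w = eucNorm w
    simp only [← sq]
    exact Real.div_sqrt

variable {d K : ℕ} {n : Fin K → ℕ} {z : Fin K → ℕ → Zd d} {w : Fin K → Zd d → ℝ}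

/-- The flow in which the translate by `u` of the `i`-th cycle carries the weight `w i u`. -/
def cycleFlow (n : Fin K → ℕ) (z : Fin K → ℕ → Zd d) (w : Fin K → Zd d → ℝ) (x v : Zd d) : ℝ :=
  ∑ i, ∑ j ∈ range (n i), if z i (j + 1) - z i j = v then w i (x - z i j) else 0

theorem sub_mem_Lam {i : Fin K} {j : ℕ} (hj : j ∈ range (n i)) :
    z i (j + 1) - z i j ∈ Lam n z :=
  mem_biUnion.mpr ⟨i, mem_univ i, mem_image_of_mem (fun j => z i (j + 1) - z i j) hj⟩

theorem cycleFlow_eq_zero {x v : Zd d} (hv : v ∉ Lam n z) : cycleFlow n z w x v = 0 :=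
  sum_eq_zero fun _ _ => sum_eq_zero fun _ hj => if_neg (ne_of_mem_of_not_mem (sub_mem_Lam hj) hv)

theorem sum_Lam_ite (F : Fin K → ℕ → Zd d → ℝ) :
    ∑ v ∈ Lam n z, ∑ i, ∑ j ∈ range (n i), (if z i (j + 1) - z i j = v then F i j v else 0) =
      ∑ i, ∑ j ∈ range (n i), F i j (z i (j + 1) - z i j) := by
  rw [sum_comm]
  refine sum_congr rfl fun i _ => ?_
  rw [sum_comm]
  refine sum_congr rfl fun j hj => ?_
  rw [sum_ite_eq, if_pos (sub_mem_Lam hj)]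

theorem outflow_cycleFlow (w : Fin K → Zd d → ℝ) (x : Zd d) :
    outflow (Lam n z) (cycleFlow n z w) x = ∑ i, ∑ j ∈ range (n i), w i (x - z i j) :=
  sum_Lam_ite fun i j _ => w i (x - z i j)

theorem balancedFlow_cycleFlow (hcyc : ∀ i, z i (n i) = z i 0) (hw : ∀ i u, 0 ≤ w i u)
    (hpos : ∀ x, 0 < outflow (Lam n z) (cycleFlow n z w) x) :
    BalancedFlow (Lam n z) (cycleFlow n z w) where
  nonneg x v := sum_nonneg fun i _ => sum_nonneg fun j _ => by
    split_ifs
    · exact hw _ _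
    · exact le_rfl
  outflow_pos := hpos
  inflow_eq x := by
    rw [outflow_cycleFlow]
    refine (sum_Lam_ite fun i j v => w i (x - v - z i j)).trans (sum_congr rfl fun i _ => ?_)
    have hrotate := (sum_range_succ (fun j => w i (x - z i j)) (n i)).symm.trans
      (sum_range_succ' (fun j => w i (x - z i j)) (n i))
    rw [hcyc i] at hrotate
    rw [add_right_cancel hrotate]
    refine sum_congr rfl fun j _ => ?_
    rw [sub_sub, sub_add_cancel]

theorem isTilt_cycleFlow (hw : ∀ i u, 0 ≤ w i u) {φ : Zd d →+ ℝ} {B : ℝ}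
    (hB : ∀ i, ∀ j < n i, |φ (z i j)| ≤ B) (t : ℝ) :
    IsTilt (Lam n z) (fun x => t * φ x) (B * |t|) (cycleFlow n z w)
      (cycleFlow n z fun i u => Real.exp (t * φ u) * w i u) := by
  have hcycle : ∀ i, ∀ j ∈ range (n i), ∀ x,
      t * φ x - B * |t| ≤ t * φ (x - z i j) ∧ t * φ (x - z i j) ≤ t * φ x + B * |t| := by
    intro i j hj x
    have habs : |t * φ (z i j)| ≤ B * |t| := by
      rw [abs_mul, mul_comm]
      exact mul_le_mul_of_nonneg_right (hB i j (mem_range.mp hj)) (abs_nonneg t)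
    rw [map_sub, mul_sub]
    constructor <;> linarith [abs_le.mp habs]
  refine ⟨fun x v _ => ?_, fun x v _ => ?_⟩ <;>
    simp only [cycleFlow, mul_sum, mul_ite, mul_zero] <;>
    refine sum_le_sum fun i _ => sum_le_sum fun j hj => ?_ <;>
    split_ifs <;> try exact le_rfl
  · exact mul_le_mul_of_nonneg_right (Real.exp_le_exp.mpr (hcycle i j hj x).1) (hw _ _)
  · exact mul_le_mul_of_nonneg_right (Real.exp_le_exp.mpr (hcycle i j hj x).2) (hw _ _)

theorem hasTilts_cycleFlow (hcyc : ∀ i, z i (n i) = z i 0) (hw : ∀ i u, 0 ≤ w i u)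
    (hpos : ∀ x, 0 < outflow (Lam n z) (cycleFlow n z w) x) {φ : Zd d →+ ℝ} {B : ℝ}
    (hB : ∀ i, ∀ j < n i, |φ (z i j)| ≤ B) : HasTilts (Lam n z) φ B (cycleFlow n z w) := fun t => by
  have htilt := isTilt_cycleFlow hw hB t
  refine ⟨_, balancedFlow_cycleFlow hcyc (fun i u => mul_nonneg (Real.exp_pos _).le (hw i u))
    fun x => ?_, htilt⟩
  exact (mul_pos (Real.exp_pos _) (hpos x)).trans_le (htilt.le_outflow x)

theorem tsum_ite_exists_eq_sum {G : Type*} [AddCommGroup G] [DecidableEq G] {l : ℕ} {ζ : ℕ → G}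
    (hinj : ∀ j k, j < l → k < l → ζ j = ζ k → j = k) (p : ℕ → Prop) [DecidablePred p]
    (f : G → ℝ) :
    ∑' u, (if ∃ j < l, ζ j + u = 0 ∧ p j then f u else 0) =
      ∑ j ∈ range l, if p j then f (-ζ j) else 0 := by
  have hpoint : ∀ u, (if ∃ j < l, ζ j + u = 0 ∧ p j then f u else 0) =
      ∑ j ∈ range l, if u = -ζ j then (if p j then f (-ζ j) else 0) else 0 := fun u => by
    split_ifs with h
    · obtain ⟨j, hj, hju, hp⟩ := h
      have hu : u = -ζ j := (neg_eq_of_add_eq_zero_right hju).symm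
      rw [sum_eq_single_of_mem j (mem_range.mpr hj), if_pos hu, if_pos hp, hu]
      exact fun k hk hkj => if_neg fun hku =>
        hkj (hinj k j (mem_range.mp hk) hj (neg_injective (hku.symm.trans hu)))
    · refine (sum_eq_zero fun j hj => ?_).symm
      split_ifs with hu hp
      · exact absurd ⟨j, mem_range.mp hj, by rw [hu, add_neg_cancel], hp⟩ h
      · rfl
      · rfl
  simp only [hpoint]
  rw [Summable.tsum_finsetSum fun j _ => (hasSum_ite_eq (-ζ j) _).summable]
  exact sum_congr rfl fun j _ => tsum_ite_eq (-ζ j) _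

section Environment

variable {Ω : Type*} {T : Zd d → Ω → Ω} {W : Fin K → Ω → ℝ}

theorem Mfun_eq_outflow (hinj : ∀ i, ∀ j k, j < n i → k < n i → z i j = z i k → j = k)
    (hT : ∀ x y : Zd d, T (x + y) = T x ∘ T y) (ω : Ω) (x : Zd d) :
    Mfun n z T W (T x ω) = outflow (Lam n z) (cycleFlow n z fun i u => W i (T u ω)) x := by
  rw [outflow_cycleFlow, Mfun]
  refine sum_congr rfl fun i _ => ?_
  have hsum := tsum_ite_exists_eq_sum (hinj i) (fun _ => True) fun u => W i (T u (T x ω))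
  simp only [and_true, if_true] at hsum
  rw [hsum]
  refine sum_congr rfl fun j _ => ?_
  rw [sub_eq_neg_add, hT, comp_apply]

theorem exists_sub_one_edge_iff {l : ℕ} {ζ : ℕ → Zd d} {u v : Zd d} :
    (∃ j, 1 ≤ j ∧ j ≤ l ∧ ζ (j - 1) + u = 0 ∧ ζ j + u = v) ↔
      ∃ j < l, ζ j + u = 0 ∧ ζ (j + 1) - ζ j = v := by
  have hstep : ∀ j, ζ j + u = 0 → ζ (j + 1) + u = ζ (j + 1) - ζ j := fun j hj => by
    rw [← add_sub_add_right_eq_sub _ _ u, hj, sub_zero]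
  constructor
  · rintro ⟨j, h1, hj, h0, hv⟩
    obtain ⟨j, rfl⟩ := Nat.exists_eq_add_of_le' h1
    exact ⟨j, hj, h0, (hstep j h0).symm.trans hv⟩
  · rintro ⟨j, hj, h0, hv⟩
    exact ⟨j + 1, by omega, hj, h0, (hstep j h0).trans hv⟩

theorem Qker_eq_div (hinj : ∀ i, ∀ j k, j < n i → k < n i → z i j = z i k → j = k)
    (hT : ∀ x y : Zd d, T (x + y) = T x ∘ T y) (ω : Ω) (x y : Zd d) :
    Qker n z T W ω x y = cycleFlow n z (fun i u => W i (T u ω)) x (y - x) /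
      outflow (Lam n z) (cycleFlow n z fun i u => W i (T u ω)) x := by
  rw [Qker, pfun, Mfun_eq_outflow hinj hT, div_eq_inv_mul, cycleFlow]
  congr 1
  refine sum_congr rfl fun i _ => ?_
  refine (tsum_congr fun u => if_congr exists_sub_one_edge_iff rfl rfl).trans
    ((tsum_ite_exists_eq_sum (hinj i) (fun j => z i (j + 1) - z i j = y - x)
      fun u => W i (T u (T x ω))).trans (sum_congr rfl fun j _ => ?_))
  rw [sub_eq_neg_add x, hT, comp_apply]

end Environment

section Kernel

variable {V : Finset (Zd d)} {b Q : Zd d → Zd d → ℝ}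

theorem pow_walkOp_eq_weightedSum {f : Zd d → ℝ} (hf : f.HasFiniteSupport) (m : ℕ) (x : Zd d) :
    (walkOp V b ^ m) f x = weightedSum (fun u => heatKernel V b m u x) f := by
  obtain ⟨s, hs⟩ : ∃ s : Finset (Zd d), ∀ u ∉ s, f u = 0 :=
    ⟨Set.Finite.toFinset hf, fun u hu =>
      by_contra fun h => hu ((Set.Finite.mem_toFinset hf).mpr h)⟩
  have hsum : f = ∑ u ∈ s, f u • Pi.single u 1 := by
    ext u
    simpa [Pi.single_apply] using hs u
  rw [weightedSum, tsum_eq_sum fun u hu => by rw [hs u hu, mul_zero]]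
  conv_lhs => rw [hsum]
  simp only [map_sum, map_smul, Finset.sum_apply, Pi.smul_apply, smul_eq_mul]
  exact sum_congr rfl fun u _ => mul_comm _ _

theorem walkOp_single (hb : ∀ x, ∀ v ∉ V, b x v = 0) (x y : Zd d) :
    walkOp V b (Pi.single y 1) x = b x (y - x) / outflow V b x := by
  rw [walkOp_apply, div_eq_inv_mul]
  congr 1
  simp only [Pi.single_apply, ← eq_sub_iff_add_eq', mul_ite, mul_one, mul_zero, sum_ite_eq']
  split_ifs with h
  · rfl
  · exact (hb x _ h).symm

theorem kerpow_eq_heatKernel (hb : ∀ x, ∀ v ∉ V, b x v = 0)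
    (hQ : ∀ x y, Q x y = b x (y - x) / outflow V b x) (m : ℕ) (x y : Zd d) :
    kerpow Q m x y = heatKernel V b m y x := by
  induction m generalizing y with
  | zero => simp [kerpow, heatKernel, Pi.single_apply]
  | succ m ih =>
    rw [heatKernel, pow_succ, Module.End.mul_apply, pow_walkOp_eq_weightedSum (by fun_prop), kerpow,
      weightedSum]
    exact tsum_congr fun u => by rw [ih, hQ, walkOp_single hb]

end Kernel

end Cycles
section Main

theorem exists_eucNorm_le {d : ℕ} (s : Finset (Zd d)) :
    ∃ B : ℝ, 0 < B ∧ ∀ v ∈ s, eucNorm v ≤ B := by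
  obtain ⟨B, hB⟩ := (s.image eucNorm).bddAbove
  exact ⟨max B 1, by positivity, fun v hv =>
    (hB (mem_image_of_mem eucNorm hv)).trans (le_max_left B 1)⟩

theorem inv_sqrt_pow_mul_exp_le {d m : ℕ} {A D : ℝ} (hA : 0 < A) (hD : 0 < D) (hm : 1 ≤ m)
    (ρ : ℝ) :
    A * (√(m + 1) ^ d)⁻¹ * Real.exp (-(ρ ^ 2 / (D * (m + 1)))) ≤
      (A + 2 * D) * (m : ℝ) ^ (-(d : ℝ) / 2) * Real.exp (-(ρ ^ 2) / ((A + 2 * D) * m)) := by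
  have hm' : (1 : ℝ) ≤ m := by exact_mod_cast hm
  have hm0 : (0 : ℝ) < m := by linarith
  have hpow : (m : ℝ) ^ (-(d : ℝ) / 2) = (√m ^ d)⁻¹ := by
    rw [neg_div, Real.rpow_neg hm0.le, Real.rpow_div_two_eq_sqrt _ hm0.le, Real.rpow_natCast]
  rw [hpow, neg_div]
  gcongr ?_ * (?_ ^ d)⁻¹ * Real.exp (-(ρ ^ 2 / ?_))
  · linarith
  · exact Real.sqrt_le_sqrt (by linarith)
  · nlinarith

theorem ellipticFlow_cycleFlow {d K : ℕ} {Ω : Type*} {n : Fin K → ℕ} {z : Fin K → ℕ → Zd d}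
    {T : Zd d → Ω → Ω} {W : Fin K → Ω → ℝ} {c C ε : ℝ} {N : ℕ} (hcyc : ∀ i, z i (n i) = z i 0)
    (hinj : ∀ i, ∀ j k, j < n i → k < n i → z i j = z i k → j = k)
    (hT : ∀ x y : Zd d, T (x + y) = T x ∘ T y) (hW : ∀ i ω, 0 ≤ W i ω) (hc : 0 < c)
    (hM : ∀ ω, c ≤ Mfun n z T W ω ∧ Mfun n z T W ω ≤ C) (ω : Ω)
    (hirr : ∀ x e : Zd d, eucNorm e = 1 → ∃ m ≤ N, ε ≤ kerpow (Qker n z T W ω) m x (x + e)) :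
    EllipticFlow (Lam n z) (cycleFlow n z fun i u => W i (T u ω)) c C ε N where
  toBalancedFlow := balancedFlow_cycleFlow hcyc (fun i u => hW i _) fun x =>
    Mfun_eq_outflow hinj hT ω x ▸ hc.trans_le (hM _).1
  le_outflow x := Mfun_eq_outflow hinj hT ω x ▸ (hM _).1
  outflow_le x := Mfun_eq_outflow hinj hT ω x ▸ (hM _).2
  irred x e he := by
    simpa only [kerpow_eq_heatKernel (fun _ _ => cycleFlow_eq_zero) (Qker_eq_div hinj hT ω)]
      using hirr x e he

end Main

theorem quenched_gaussian_upper_bound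
    (d K : ℕ) (hd : 0 < d) (hK : 0 < K) (Ω : Type*)
    (n : Fin K → ℕ) (z : Fin K → ℕ → Zd d)
    (T : Zd d → Ω → Ω) (W : Fin K → Ω → ℝ) (c C : ℝ)
    (hlen : ∀ i, 0 < n i)
    (hcyc : ∀ i, z i (n i) = z i 0)
    (hinj : ∀ i, ∀ j k, j < n i → k < n i → z i j = z i k → j = k)
    (hT : ∀ x y : Zd d, T (x + y) = T x ∘ T y) (hT0 : T 0 = id)
    (hW : ∀ i ω, 0 ≤ W i ω)
    (hc : 0 < c) (hCfin : c ≤ C)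
    (hM : ∀ ω, c ≤ Mfun n z T W ω ∧ Mfun n z T W ω ≤ C)
    (ε : ℝ) (N : ℕ) (hε : 0 < ε)
    (hirr : ∀ (x : Zd d) (ω : Ω) (e : Zd d), eucNorm e = 1 →
      ∃ m ≤ N, ε ≤ kerpow (Qker n z T W ω) m x (x + e)) :
    ∃ C₀ : ℝ, 0 < C₀ ∧ ∀ (ω : Ω) (m : ℕ), 1 ≤ m → ∀ x y : Zd d,
      kerpow (Qker n z T W ω) m x y
        ≤ C₀ * (m : ℝ) ^ (-(d : ℝ) / 2) * Real.exp (-(eucNorm (y - x) ^ 2) / (C₀ * m)) := by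
  have hC : 0 < C := hc.trans_le hCfin
  obtain ⟨A, hA, hheat⟩ := exists_heatKernel_le hd hc hC hε N
  obtain ⟨B, hB, hcycle⟩ := exists_eucNorm_le (univ.biUnion fun i => (range (n i)).image (z i))
  obtain ⟨R, hR, hjump⟩ := exists_eucNorm_le (Lam n z)
  have hD : 0 < 51200 * (B + R) ^ 2 := by positivity
  refine ⟨A + 2 * (51200 * (B + R) ^ 2), by positivity, fun ω m hm x y => ?_⟩
  have hflow := ellipticFlow_cycleFlow hcyc hinj hT hW hc hM ω fun x e he => hirr x ω e he
  obtain ⟨φ, hφ, hφxy⟩ := exists_addMonoidHom_eq_eucNorm (x - y)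
  have htilts := hasTilts_cycleFlow hcyc (fun i u => hW i (T u ω)) hflow.outflow_pos
    fun i j hj => (hφ (z i j)).trans <| hcycle _ <|
      mem_biUnion.mpr ⟨i, mem_univ i, mem_image_of_mem (z i) (mem_range.mpr hj)⟩
  rw [map_sub] at hφxy
  have hyx : φ y ≤ φ x := sub_nonneg.mp (hφxy ▸ eucNorm_nonneg _)
  rw [kerpow_eq_heatKernel (fun _ _ => cycleFlow_eq_zero) (Qker_eq_div hinj hT ω),
    eucNorm_sub_comm y x, ← hφxy]
  exact (hheat _ _ hflow φ B R hB hR.le htilts (fun v hv => (hφ v).trans (hjump v hv)) x y hyx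
    m).trans (inv_sqrt_pow_mul_exp_le hA hD hm _)

end
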